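/- arXiv:1802.01558 — 7 statements merged into one kernel-verified Lean document; each statement's English description precedes it below -/
import Mathlib

section
/- Let f : Ω → ℝ be bounded and measurable. Then ∫_Ω Gf dπ = 0; that is, the product measure π is invariant for the generator G of the environment seen from the walker on the randomly-oriented Manhattan lattice. -/
open MeasureTheory Real Filter Topology Finset

noncomputable section

namespace RWOML

/-- The `j`-th standard unit vector of `ℤ^d`. -/
def e (d : ℕ) (j : Fin d) : Fin d → ℤ := fun k => if k = j then 1 else 0

/-- The hyperplane `U_i = {x ∈ ℤ^d : x_i = 0}`. -/
abbrev U (d : ℕ) (i : Fin d) : Type := {x : Fin d → ℤ // x i = 0}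

/-- The index set of the lines of `ℤ^d`: pairs `(i, x)` with `x ∈ U_i`. -/
abbrev Idx (d : ℕ) : Type := Σ i : Fin d, U d i

/-- The space `Ω` of orientations (`±1`-valued, coded as `ℤˣ`) of all lines. -/
abbrev Env (d : ℕ) : Type := Idx d → ℤˣ

instance : MeasurableSpace ℤˣ := ⊤

/-- The coordinate `ω(i,x)` read as a real number (`±1`). -/
def chi {d : ℕ} (ω : Env d) {i : Fin d} (x : U d i) : ℝ := ((ω ⟨i, x⟩ : ℤ) : ℝ)

/-- The origin, as an element of `U_i`. -/
def o (d : ℕ) (i : Fin d) : U d i := ⟨0, rfl⟩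

/-- Translation `x ↦ x + ε e_j` on `U_i` (junk value when `j = i`, a case never used below). -/
def shift {d : ℕ} (j : Fin d) (ε : ℤ) {i : Fin d} (x : U d i) : U d i :=
  if h : j = i then x else
    ⟨fun k => x.1 k + ε * e d j k, by
      have hij : ¬ i = j := fun hh => h hh.symm
      simp [e, hij, x.2]⟩

/-- The translation `τ_i^{ε}` (`ε = ±1`) of the environment:
`(τ_i^{ε}ω)(j,x) = ω(j, x + ε e_i)` for `j ≠ i` and `(τ_i^{ε}ω)(i,x) = ω(i,x)`. -/
def tau {d : ℕ} (i : Fin d) (ε : ℤ) (ω : Env d) : Env d :=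
  fun q => ω ⟨q.1, shift i ε q.2⟩

/-- `μ` is the product over all lines `(i,x)` of the uniform measure on `{−1,1}`:
every cylinder set gets its product probability.  This uniquely characterises `π`. -/
def IsEnvMeasure {d : ℕ} (μ : Measure (Env d)) : Prop :=
  ∀ (s : Finset (Idx d)) (a : Env d),
    μ {ω | ∀ q ∈ s, ω q = a q} = (2 : ENNReal)⁻¹ ^ s.card

/-- The generator `G` of the environment seen from the walker. -/
def G {d : ℕ} (f : Env d → ℝ) (ω : Env d) : ℝ :=
  ∑ i : Fin d, ((1 + chi ω (o d i)) / 2 * f (tau i 1 ω)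
    + (1 - chi ω (o d i)) / 2 * f (tau i (-1) ω) - f ω)

/-- The adjoint `G*` of `G`. -/
def Gstar {d : ℕ} (f : Env d → ℝ) (ω : Env d) : ℝ :=
  ∑ i : Fin d, ((1 - chi ω (o d i)) / 2 * f (tau i 1 ω)
    + (1 + chi ω (o d i)) / 2 * f (tau i (-1) ω) - f ω)

/-- The symmetric part `S = (G + G*)/2`. -/
def S {d : ℕ} (f : Env d → ℝ) (ω : Env d) : ℝ :=
  (1 / 2) * ∑ i : Fin d, (f (tau i 1 ω) + f (tau i (-1) ω) - 2 * f ω)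

/-- The antisymmetric part `A = (G − G*)/2`. -/
def A {d : ℕ} (f : Env d → ℝ) (ω : Env d) : ℝ :=
  ∑ i : Fin d, chi ω (o d i) * (f (tau i 1 ω) - f (tau i (-1) ω))

/-- Fourier transform `û(p) = Σ_{x ∈ U_i} e^{𝐢 p·x} u(x)` of `u : U_i → ℝ` extended by `0`. -/
def uhat {d : ℕ} {i : Fin d} (u : U d i → ℝ) (p : Fin d → ℝ) : ℂ :=
  ∑' x : U d i, Complex.exp (Complex.I * (∑ j, p j * ((x.1 j : ℤ) : ℝ))) * (u x : ℂ)

/-- Fourier transform of a two-variable function `v : U_i × U_j → ℝ` extended by `0`. -/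
def vhat {d : ℕ} {i j : Fin d} (v : U d i → U d j → ℝ) (p q : Fin d → ℝ) : ℂ :=
  ∑' z : U d i × U d j,
    Complex.exp (Complex.I * ((∑ k, p k * ((z.1.1 k : ℤ) : ℝ)) + ∑ k, q k * ((z.2.1 k : ℤ) : ℝ)))
      * (v z.1 z.2 : ℂ)

/-- `d̂(p) = Σ_j 4 sin²(p_j/2)`. -/
def dhat {d : ℕ} (p : Fin d → ℝ) : ℝ := ∑ j, 4 * Real.sin (p j / 2) ^ 2

/-- The fundamental domain `[0,2π)^d` of the torus `𝕋^d`. -/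
def box (d : ℕ) : Set (Fin d → ℝ) := Set.univ.pi fun _ => Set.Ico 0 (2 * Real.pi)

/-!
The line through the origin in direction `e_i` has an orientation `ω(i,0) = ±1` which the
translations `τ_i^{±1}` do not change, so exactly one of the two weights in the `i`-th term of `G`
is `1` and `Gf = ∑ i, (f ∘ T_i - f)` with `T_i ω = τ_i^{ω(i,0)} ω`. Permuting the lines preserves
`π`, so each `τ_i^{±1}` does; since `T_i` agrees with one of them on each of the invariant events
`{ω(i,0) = 1}` and `{ω(i,0) = -1}`, it preserves `π` as well, and every term integrates to `0`.
-/

section General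

variable {α β ι : Type*} [MeasurableSpace α] [MeasurableSpace β]

lemma integral_comp_of_measurePreserving {E : Type*} [NormedAddCommGroup E] [NormedSpace ℝ E]
    {μ : Measure α} {ν : Measure β} {T : α → β} (hT : MeasurePreserving T μ ν) {f : β → E}
    (hf : AEStronglyMeasurable f ν) : ∫ x, f (T x) ∂μ = ∫ y, f y ∂ν := by
  rw [← hT.map_eq] at hf ⊢
  exact (integral_map hT.aemeasurable hf).symm

lemma measurePreserving_of_invariant_index [Countable ι] [MeasurableSpace ι]
    [MeasurableSingletonClass ι] {μ : Measure α} {τ : ι → α → α} {c : α → ι}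
    (hτ : ∀ u, MeasurePreserving (τ u) μ μ) (hc : Measurable c)
    (hcτ : ∀ u x, c (τ u x) = c x) : MeasurePreserving (fun x ↦ τ (c x) x) μ μ := by
  have hmeas : Measurable fun x ↦ τ (c x) x :=
    (measurable_from_prod_countable_right (f := fun p : ι × α ↦ τ p.1 p.2)
      fun u ↦ (hτ u).measurable).comp (hc.prodMk measurable_id)
  have hcover : ⋃ u, c ⁻¹' {u} = Set.univ := by
    rw [← Set.preimage_iUnion, Set.iUnion_of_singleton, Set.preimage_univ]
  refine ⟨hmeas, (Measure.ext_iff_of_iUnion_eq_univ hcover).2 fun u ↦ Measure.ext fun B hB ↦ ?_⟩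
  have hBu : MeasurableSet (B ∩ c ⁻¹' {u}) := hB.inter (hc (measurableSet_singleton u))
  have hpre : (fun x ↦ τ (c x) x) ⁻¹' (B ∩ c ⁻¹' {u}) = τ u ⁻¹' (B ∩ c ⁻¹' {u}) := by
    ext x
    simp only [Set.mem_preimage, Set.mem_inter_iff, Set.mem_singleton_iff, hcτ]
    exact and_congr_left fun hx ↦ by rw [hx]
  rw [Measure.restrict_apply hB, Measure.restrict_apply hB, Measure.map_apply hmeas hBu, hpre,
    (hτ u).measure_preimage hBu.nullMeasurableSet]

lemma measurable_comp_right {κ : Type*} (σ : κ → ι) : Measurable fun x : ι → α ↦ x ∘ σ :=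
  measurable_pi_lambda _ fun k ↦ measurable_pi_apply (σ k)

end General

section Cylinders

variable {ι : Type*} {X : ι → Type*} [∀ i, MeasurableSpace (X i)]
  [∀ i, MeasurableSingletonClass (X i)]

lemma measurableSet_forall_mem_finset_eq (s : Finset ι) (a : ∀ i, X i) :
    MeasurableSet {x : ∀ i, X i | ∀ i ∈ s, x i = a i} := by
  rw [show {x : ∀ i, X i | ∀ i ∈ s, x i = a i} = (s : Set ι).pi fun i ↦ {a i} from rfl]
  exact .pi s.countable_toSet fun i _ ↦ measurableSet_singleton (a i)

lemma measure_ext_of_forall_mem_finset_eq [∀ i, Countable (X i)] {μ ν : Measure (∀ i, X i)}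
    [IsFiniteMeasure μ] (h : ∀ (s : Finset ι) (a : ∀ i, X i),
      μ {x | ∀ i ∈ s, x i = a i} = ν {x | ∀ i ∈ s, x i = a i}) : μ = ν := by
  refine IsProjectiveLimit.unique (P := fun s : Finset ι ↦ μ.map s.restrict) (fun _ ↦ rfl)
    fun s ↦ Measure.ext_of_singleton fun y ↦ ?_
  let r : (∀ i, X i) → ∀ i : s, X i := s.restrict
  have hr : Measurable r := Finset.measurable_restrict s
  rw [Measure.map_apply hr (measurableSet_singleton y),
    Measure.map_apply hr (measurableSet_singleton y)]
  obtain hempty | ⟨a, rfl⟩ := (r ⁻¹' {y}).eq_empty_or_nonempty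
  · rw [hempty, measure_empty, measure_empty]
  · have hfiber : r ⁻¹' {r a} = {x | ∀ i ∈ s, x i = a i} := by
      ext x
      simp [r, funext_iff]
    rw [hfiber, h s a]

end Cylinders

instance : DiscreteMeasurableSpace ℤˣ := ⟨fun _ ↦ trivial⟩

section Environment

variable {d : ℕ} {μ : Measure (Env d)}

lemma IsEnvMeasure.isProbabilityMeasure (hμ : IsEnvMeasure μ) : IsProbabilityMeasure μ :=
  ⟨by simpa using hμ ∅ 1⟩

lemma IsEnvMeasure.unique {ν : Measure (Env d)} (hμ : IsEnvMeasure μ) (hν : IsEnvMeasure ν) :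
    μ = ν :=
  have := hμ.isProbabilityMeasure
  measure_ext_of_forall_mem_finset_eq fun s a ↦ (hμ s a).trans (hν s a).symm

lemma IsEnvMeasure.map_comp_right (hμ : IsEnvMeasure μ) {σ : Idx d → Idx d}
    (hσ : Function.Injective σ) : IsEnvMeasure (μ.map fun ω ↦ ω ∘ σ) := by
  intro s a
  have hpre : (fun ω : Env d ↦ ω ∘ σ) ⁻¹' {ω | ∀ q ∈ s, ω q = a q} =
      {ω | ∀ q ∈ s.map ⟨σ, hσ⟩, ω q = Function.extend σ a 1 q} := by
    ext ω
    simp only [Set.mem_preimage, Set.mem_ofPred_eq, Finset.forall_mem_map,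
      Function.Embedding.coeFn_mk, Function.comp_apply, hσ.extend_apply]
  rw [Measure.map_apply (measurable_comp_right σ) (measurableSet_forall_mem_finset_eq s a), hpre,
    hμ, Finset.card_map]

lemma shift_injective (j : Fin d) (ε : ℤ) {i : Fin d} :
    Function.Injective (shift j ε : U d i → U d i) := by
  intro x y hxy
  unfold shift at hxy
  split_ifs at hxy
  · exact hxy
  · ext k
    exact add_right_cancel (congrFun (congrArg Subtype.val hxy) k)

lemma IsEnvMeasure.measurePreserving_tau (hμ : IsEnvMeasure μ) (i : Fin d) (ε : ℤ) :
    MeasurePreserving (tau i ε) μ μ :=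
  have hσ : Function.Injective (Sigma.map id fun _ ↦ shift i ε : Idx d → Idx d) :=
    Function.injective_id.sigma_map fun _ ↦ shift_injective i ε
  ⟨measurable_comp_right _, (hμ.map_comp_right hσ).unique hμ⟩

lemma tau_apply_self (i : Fin d) (ε : ℤ) (ω : Env d) (x : U d i) :
    tau i ε ω ⟨i, x⟩ = ω ⟨i, x⟩ := by
  simp [tau, shift]

/-- The environment seen from the walker after a jump along the line in direction `e_i` through its
position, in the direction in which that line is oriented: `T_i ω = τ_i^{ω(i,0)} ω`. -/
def jump (i : Fin d) (ω : Env d) : Env d := tau i (ω ⟨i, o d i⟩ : ℤˣ) ω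

lemma G_eq_sum_jump (f : Env d → ℝ) (ω : Env d) : G f ω = ∑ i, (f (jump i ω) - f ω) := by
  refine Finset.sum_congr rfl fun i _ ↦ ?_
  obtain h | h := Int.units_eq_one_or (ω ⟨i, o d i⟩) <;> simp [chi, jump, h]

lemma IsEnvMeasure.measurePreserving_jump (hμ : IsEnvMeasure μ) (i : Fin d) :
    MeasurePreserving (jump i) μ μ :=
  measurePreserving_of_invariant_index (τ := fun u : ℤˣ ↦ tau i u)
    (fun u ↦ hμ.measurePreserving_tau i u) (measurable_pi_apply (⟨i, o d i⟩ : Idx d))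
    fun u ω ↦ tau_apply_self i u ω (o d i)

theorem stmt0_general (hμ : IsEnvMeasure μ) {f : Env d → ℝ} (hf : Integrable f μ) :
    ∫ ω, G f ω ∂μ = 0 := by
  have hjump (i : Fin d) : Integrable (fun ω ↦ f (jump i ω)) μ :=
    (hμ.measurePreserving_jump i).integrable_comp_of_integrable hf
  have hterm (i : Fin d) : Integrable (fun ω ↦ f (jump i ω) - f ω) μ := (hjump i).sub hf
  simp_rw [G_eq_sum_jump]
  rw [integral_finsetSum _ fun i _ ↦ hterm i]
  refine Finset.sum_eq_zero fun i _ ↦ ?_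
  rw [integral_sub (hjump i) hf, integral_comp_of_measurePreserving
    (hμ.measurePreserving_jump i) hf.aestronglyMeasurable, sub_self]

end Environment

/-- For bounded measurable `f : Ω → ℝ` one has `∫ Gf dπ = 0`, i.e. the product
measure `π` is invariant for the generator `G` of the environment seen from the walker. -/
theorem stmt0 (d : ℕ) (hd : 2 ≤ d) (μ : Measure (Env d)) (hμ : IsEnvMeasure μ)
    (f : Env d → ℝ) (hf_meas : Measurable f) (hf_bdd : ∃ C : ℝ, ∀ ω, |f ω| ≤ C) :
    ∫ ω, G f ω ∂μ = 0 := by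
  obtain ⟨C, hC⟩ := hf_bdd
  have := hμ.isProbabilityMeasure
  exact stmt0_general hμ (.of_bound hf_meas.aestronglyMeasurable C (ae_of_all _ hC))

end RWOML
end
end

section
/- Fix 1 ≤ i, j ≤ d with i ≠ j and let v : U_i × U_j → ℝ be summable. Let ζ(ω) = Σ_{x ∈ U_i} Σ_{y ∈ U_j} v(x,y) ω(i,x) ω(j,y), the series converging in L²(Ω, π). Then Sζ(ω) = Σ_{x ∈ U_i} Σ_{y ∈ U_j} v*(x,y) ω(i,x) ω(j,y) in L²(Ω, π), where v* : U_i × U_j → ℝ is the square-summable function whose Fourier transform satisfies v̂*(p,q) = −(1/2) d̂(p^{(i)} + q^{(j)}) v̂(p,q) for all p, q ∈ 𝕋^d. -/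
open MeasureTheory Real Filter Topology Finset

noncomputable section

namespace RWOML

/-!
Translating the environment by `e_k` amounts to translating both arguments of the kernel `v`, so
`S` acts on `Σ v(x,y) ω(i,x) ω(j,y)` by applying to `v` half the lattice Laplacian of the
simultaneous translations of `U_i × U_j`. The characters of `U_i × U_j` are eigenfunctions of that
operator, with eigenvalue `−d̂(p^{(i)} + q^{(j)}) / 2`, so it produces a kernel with the Fourier
transform prescribed for `v*`. An absolutely convergent Fourier series determines its coefficients,
hence this kernel is `v*`.
-/

section Laplacian

variable {ι α 𝕜 : Type*} [Fintype ι]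

/-- The generator `f ↦ ½ Σ_k (f ∘ T_k + f ∘ T_k⁻¹ − 2 f)` of the random walk that applies the
permutations `T_k` and their inverses, each at rate `½`; the factor `½` matches the one in `S`. -/
def laplacian [Field 𝕜] (T : ι → Equiv.Perm α) (f : α → 𝕜) (a : α) : 𝕜 :=
  (1 / 2) * ∑ k, (f (T k a) + f ((T k).symm a) - 2 * f a)

lemma map_laplacian {𝕝 : Type*} [Field 𝕜] [Field 𝕝] (φ : 𝕜 →+* 𝕝) (T : ι → Equiv.Perm α)
    (f : α → 𝕜) (a : α) : φ (laplacian T f a) = laplacian T (φ ∘ f) a := by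
  simp [laplacian, map_ofNat φ 2]

lemma summable_laplacian [NormedField 𝕜] {f : α → 𝕜} (T : ι → Equiv.Perm α) (hf : Summable f) :
    Summable (laplacian T f) :=
  (summable_sum fun k _ => (((T k).summable_iff.2 hf).add ((T k).symm.summable_iff.2 hf)).sub
    (hf.mul_left 2)).mul_left _

lemma summable_mul_of_norm_le [RCLike 𝕜] {K w : α → 𝕜} {C : ℝ} (hK : ∀ a, ‖K a‖ ≤ C)
    (hw : Summable w) : Summable fun a => K a * w a :=
  (hw.norm.mul_left C).of_norm_bounded fun a =>
    (norm_mul_le _ _).trans (mul_le_mul_of_nonneg_right (hK a) (norm_nonneg _))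

lemma tsum_laplacian_mul [RCLike 𝕜] (T : ι → Equiv.Perm α) {K w : α → 𝕜} {C : ℝ}
    (hK : ∀ a, ‖K a‖ ≤ C) (hw : Summable w) :
    ∑' a, laplacian T K a * w a = (1 / 2) * ∑ k, (∑' a, K (T k a) * w a
      + ∑' a, K ((T k).symm a) * w a - 2 * ∑' a, K a * w a) := by
  have hcomp (σ : Equiv.Perm α) : HasSum (fun a => K (σ a) * w a) (∑' a, K (σ a) * w a) :=
    (summable_mul_of_norm_le (fun a => hK (σ a)) hw).hasSum
  have hsum := (hasSum_sum (s := univ) fun k _ =>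
    ((hcomp (T k)).add (hcomp (T k).symm)).sub ((hcomp 1).mul_left 2)).mul_left (1 / 2 : 𝕜)
  refine HasSum.tsum_eq (hsum.congr_fun fun a => ?_)
  simp only [laplacian, Equiv.Perm.one_apply, mul_assoc, sum_mul, sub_mul, add_mul]

lemma tsum_mul_laplacian [RCLike 𝕜] (T : ι → Equiv.Perm α) {K w : α → 𝕜} {C : ℝ}
    (hK : ∀ a, ‖K a‖ ≤ C) (hw : Summable w) :
    ∑' a, K a * laplacian T w a = ∑' a, laplacian T K a * w a := by
  have hmove (σ : Equiv.Perm α) :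
      HasSum (fun a => K a * w (σ a)) (∑' a, K (σ.symm a) * w a) := by
    have h := (summable_mul_of_norm_le (fun a => hK (σ.symm a)) hw).hasSum
    rw [← σ.hasSum_iff] at h
    simpa only [Function.comp_def, Equiv.symm_apply_apply] using h
  have hsum := (hasSum_sum (s := univ) fun k _ =>
    ((hmove (T k).symm).add (hmove (T k))).sub ((hmove 1).mul_left 2)).mul_left (1 / 2 : 𝕜)
  rw [tsum_laplacian_mul T hK hw]
  refine HasSum.tsum_eq (hsum.congr_fun fun a => ?_)
  rw [laplacian, mul_left_comm, mul_sum]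
  refine congrArg _ (sum_congr rfl fun k _ => ?_)
  rw [Equiv.Perm.one_apply]
  ring

lemma exp_add_exp_neg_sub_two (t : ℝ) :
    Complex.exp (t * Complex.I) + Complex.exp (-t * Complex.I) - 2
      = -((4 * Real.sin (t / 2) ^ 2 : ℝ) : ℂ) := by
  have hcos : Real.cos t = 1 - 2 * Real.sin (t / 2) ^ 2 := by
    rw [← Real.cos_two_mul_eq_one_sub, mul_div_cancel₀ t two_ne_zero]
  rw [← Complex.two_cos, ← Complex.ofReal_cos, hcos]
  push_cast
  ring

lemma laplacian_eq_dhat_mul {d : ℕ} {T : Fin d → Equiv.Perm α} {K : α → ℂ} {θ : Fin d → ℝ}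
    (hK : ∀ k a, K (T k a) = Complex.exp (θ k * Complex.I) * K a) (a : α) :
    laplacian T K a = -(1 / 2) * (dhat θ : ℂ) * K a := by
  have hKsymm (k : Fin d) : K ((T k).symm a) = Complex.exp (-θ k * Complex.I) * K a := by
    rw [← (T k).apply_symm_apply a, hK, (T k).apply_symm_apply, ← mul_assoc, ← Complex.exp_add,
      neg_mul, neg_add_cancel, Complex.exp_zero, one_mul]
  simp only [laplacian, hK, hKsymm, ← add_mul, ← sub_mul, exp_add_exp_neg_sub_two, ← sum_mul,
    sum_neg_distrib, ← Complex.ofReal_sum, dhat]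
  ring

end Laplacian

section FourierUniqueness

open UnitAddTorus

lemma inner_eq_of_hasSum_smul {𝕜 E α : Type*} [RCLike 𝕜] [NormedAddCommGroup E]
    [InnerProductSpace 𝕜 E] {v : α → E} (hv : Orthonormal 𝕜 v) {w : α → 𝕜} {x : E}
    (hx : HasSum (fun a => w a • v a) x) (a : α) : inner 𝕜 (v a) x = w a := by
  classical
  have h := (innerSL 𝕜 (v a)).hasSum hx
  simp only [innerSL_apply_apply, inner_smul_right, orthonormal_iff_ite.1 hv, mul_ite, mul_one,
    mul_zero] at h
  simpa using h.tsum_eq.symm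

variable {ι α : Type*} [Fintype ι] {n : α → ι → ℤ} {w : α → ℂ}

attribute [local instance] instMeasureSpaceUnitAddCircle

local instance : IsProbabilityMeasure (volume : Measure UnitAddCircle) :=
  inferInstanceAs (IsProbabilityMeasure AddCircle.haarAddCircle)

lemma mFourierCoeff_eq_of_hasSum (hn : Function.Injective n) {f : C(UnitAddTorus ι, ℂ)}
    (hf : HasSum (fun a => w a • mFourier (n a)) f) (a : α) : mFourierCoeff f (n a) = w a := by
  have hLp : HasSum (fun a => w a • mFourierLp 2 (n a)) (ContinuousMap.toLp 2 volume ℂ f) := by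
    simpa only [map_smul] using (ContinuousMap.toLp (E := ℂ) 2 volume ℂ).hasSum hf
  rw [← mFourierCoeff_toLp, ← mFourierBasis_repr, HilbertBasis.repr_apply_apply, coe_mFourierBasis]
  exact inner_eq_of_hasSum_smul (orthonormal_mFourier.comp n hn) hLp a

lemma eq_zero_of_tsum_mul_mFourier_eq_zero (hn : Function.Injective n) (hw : Summable w)
    (h : ∀ x, ∑' a, w a * mFourier (n a) x = 0) : w = 0 := by
  have hsum : Summable fun a => w a • mFourier (n a) :=
    .of_norm (by simpa only [norm_smul, mFourier_norm, mul_one] using hw.norm)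
  have hzero : ∑' a, w a • mFourier (n a) = 0 := by
    ext x
    rw [← ContinuousMap.tsum_apply hsum]
    exact h x
  funext a
  have hcoeff := mFourierCoeff_eq_of_hasSum hn (hzero ▸ hsum.hasSum) a
  simpa [mFourierCoeff] using hcoeff.symm

end FourierUniqueness

section Kernels

variable {d : ℕ} {i j : Fin d} {v w : U d i → U d j → ℝ}

/-- Translation by `e_k` as a permutation of `U_i`; like `shift`, it is the identity for `k = i`. -/
def shiftPerm (k : Fin d) : Equiv.Perm (U d i) where
  toFun := shift k 1
  invFun := shift k (-1)
  left_inv x := by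
    by_cases h : k = i
    · simp [shift, h]
    · ext l; simp [shift, h]
  right_inv x := by
    by_cases h : k = i
    · simp [shift, h]
    · ext l; simp [shift, h]

/-- Simultaneous translation of both coordinates of `U_i × U_j` by `e_k`. -/
def diagShift (k : Fin d) : Equiv.Perm (U d i × U d j) :=
  (shiftPerm k).prodCongr (shiftPerm k)

/-- The generator of the simultaneous translations acting on kernels `U_i × U_j → ℝ`; it is the
operator `v ↦ v*`. -/
def diagLaplacian (v : U d i → U d j → ℝ) : U d i → U d j → ℝ :=
  Function.curry (laplacian diagShift (Function.uncurry v))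

lemma summable_diagLaplacian (hv : Summable (Function.uncurry v)) :
    Summable (Function.uncurry (diagLaplacian v)) := by
  simpa only [diagLaplacian, Function.uncurry_curry] using summable_laplacian diagShift hv

lemma summable_ofReal_uncurry (hv : Summable (Function.uncurry v)) :
    Summable fun z : U d i × U d j => (v z.1 z.2 : ℂ) :=
  (Complex.hasSum_ofReal.2 hv.hasSum).summable

/-- The character `e^{𝐢 (p·x + q·y)}` of `U_i × U_j`. -/
def pairChar (p q : Fin d → ℝ) (z : U d i × U d j) : ℂ :=
  Complex.exp (((∑ k, p k * z.1.1 k + ∑ k, q k * z.2.1 k : ℝ) : ℂ) * Complex.I)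

lemma norm_pairChar (p q : Fin d → ℝ) (z : U d i × U d j) : ‖pairChar p q z‖ = 1 :=
  Complex.norm_exp_ofReal_mul_I _

lemma vhat_eq_tsum_pairChar (v : U d i → U d j → ℝ) (p q : Fin d → ℝ) :
    vhat v p q = ∑' z : U d i × U d j, pairChar p q z * (v z.1 z.2 : ℂ) := by
  simp only [vhat, pairChar, mul_comm Complex.I]
  push_cast
  rfl

lemma sum_mul_shiftPerm (k : Fin d) (p : Fin d → ℝ) (x : U d i) :
    ∑ l, p l * (shiftPerm k x).1 l = Function.update p i 0 k + ∑ l, p l * x.1 l := by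
  by_cases h : k = i
  · simp [shiftPerm, shift, h]
  · simp [shiftPerm, shift, h, e, mul_add, sum_add_distrib, add_comm]

lemma pairChar_diagShift (p q : Fin d → ℝ) (k : Fin d) (z : U d i × U d j) :
    pairChar p q (diagShift k z)
      = Complex.exp ((Function.update p i 0 + Function.update q j 0) k * Complex.I)
        * pairChar p q z := by
  rw [pairChar, pairChar, ← Complex.exp_add, ← add_mul]
  simp only [diagShift, Equiv.prodCongr_apply, Prod.map, sum_mul_shiftPerm, Pi.add_apply]
  push_cast
  ring_nf

lemma vhat_diagLaplacian (hv : Summable (Function.uncurry v)) (p q : Fin d → ℝ) :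
    vhat (diagLaplacian v) p q
      = -(1 / 2) * (dhat (Function.update p i 0 + Function.update q j 0) : ℂ) * vhat v p q := by
  calc vhat (diagLaplacian v) p q
      = ∑' z, pairChar p q z * laplacian diagShift (fun z => (v z.1 z.2 : ℂ)) z := by
        rw [vhat_eq_tsum_pairChar]
        exact tsum_congr fun z => congrArg _ (map_laplacian Complex.ofRealHom _ _ _)
    _ = ∑' z, laplacian diagShift (pairChar p q) z * (v z.1 z.2 : ℂ) :=
        tsum_mul_laplacian _ (fun z => (norm_pairChar p q z).le) (summable_ofReal_uncurry hv)
    _ = _ := by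
        simp only [laplacian_eq_dhat_mul (pairChar_diagShift p q), mul_assoc, tsum_mul_left,
          vhat_eq_tsum_pairChar]

lemma vhat_sub (hv : Summable (Function.uncurry v)) (hw : Summable (Function.uncurry w))
    (p q : Fin d → ℝ) : vhat (v - w) p q = vhat v p q - vhat w p q := by
  have hchar (z : U d i × U d j) := (norm_pairChar p q z).le
  simp only [vhat_eq_tsum_pairChar, Pi.sub_apply, Complex.ofReal_sub, mul_sub]
  exact (summable_mul_of_norm_le hchar (summable_ofReal_uncurry hv)).tsum_sub
    (summable_mul_of_norm_le hchar (summable_ofReal_uncurry hw))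

lemma mFourier_sumElim_coe (z : U d i × U d j) (t : Fin d ⊕ Fin d → ℝ) :
    UnitAddTorus.mFourier (Sum.elim z.1.1 z.2.1) (fun k => (t k : UnitAddCircle))
      = pairChar (fun k => 2 * π * t (.inl k)) (fun k => 2 * π * t (.inr k)) z := by
  simp only [UnitAddTorus.mFourier, ContinuousMap.coe_mk, fourier_coe_apply, pairChar,
    Fintype.prod_sum_type, Sum.elim_inl, Sum.elim_inr, ← Complex.exp_sum, ← Complex.exp_add]
  push_cast
  rw [add_mul, sum_mul, sum_mul]
  congr 2 <;> exact sum_congr rfl fun k _ => by ring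

lemma injective_sumElim_val :
    Function.Injective fun z : U d i × U d j => Sum.elim z.1.1 z.2.1 := fun _ _ h =>
  Prod.ext (Subtype.ext (congrArg (· ∘ Sum.inl) h)) (Subtype.ext (congrArg (· ∘ Sum.inr) h))

lemma two_pi_mul_mem_box {t : Fin d → ℝ} (ht : ∀ k, t k ∈ Set.Ico 0 1) :
    (fun k => 2 * π * t k) ∈ box d := fun k _ =>
  ⟨mul_nonneg two_pi_pos.le (ht k).1, mul_lt_of_lt_one_right two_pi_pos (ht k).2⟩

lemma eq_zero_of_vhat_eq_zero_on_box (hv : Summable (Function.uncurry v))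
    (h : ∀ p ∈ box d, ∀ q ∈ box d, vhat v p q = 0) : v = 0 := by
  have hzero := eq_zero_of_tsum_mul_mFourier_eq_zero (injective_sumElim_val (i := i) (j := j))
    (summable_ofReal_uncurry hv) fun x => by
      let t (k : Fin d ⊕ Fin d) : ℝ := AddCircle.equivIco 1 0 (x k)
      have ht (k : Fin d ⊕ Fin d) : t k ∈ Set.Ico (0 : ℝ) 1 := by
        simpa only [zero_add] using (AddCircle.equivIco (1 : ℝ) 0 (x k)).2
      have hx : x = fun k => (t k : UnitAddCircle) := funext fun k => AddCircle.coe_equivIco.symm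
      rw [hx, ← h _ (two_pi_mul_mem_box fun k => ht (.inl k)) _
        (two_pi_mul_mem_box fun k => ht (.inr k)), vhat_eq_tsum_pairChar]
      exact tsum_congr fun z => by rw [mFourier_sumElim_coe, mul_comm]
  funext x y
  exact Complex.ofReal_eq_zero.1 (congrFun hzero (x, y))

lemma eq_of_vhat_eqOn_box (hv : Summable (Function.uncurry v)) (hw : Summable (Function.uncurry w))
    (h : ∀ p ∈ box d, ∀ q ∈ box d, vhat v p q = vhat w p q) : v = w :=
  sub_eq_zero.1 <| eq_zero_of_vhat_eq_zero_on_box (hv.sub hw) fun p hp q hq => by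
    rw [vhat_sub hv hw, h p hp q hq, sub_self]

end Kernels

section Chaos

variable {d : ℕ} {i j : Fin d} {v vstar : U d i → U d j → ℝ}

/-- The homogeneous polynomial of degree two `Σ_{x,y} v(x,y) ω(i,x) ω(j,y)` in the environment
with kernel `v`. -/
def chaos (v : U d i → U d j → ℝ) (ω : Env d) : ℝ :=
  ∑' z : U d i × U d j, v z.1 z.2 * chi ω z.1 * chi ω z.2

lemma abs_chi (ω : Env d) (x : U d i) : |chi ω x| = 1 := by
  rcases Int.units_eq_one_or (ω ⟨i, x⟩) with h | h <;> simp [chi, h]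

lemma chaos_eq_tsum_mul (v : U d i → U d j → ℝ) (ω : Env d) :
    chaos v ω = ∑' z : U d i × U d j, chi ω z.1 * chi ω z.2 * v z.1 z.2 :=
  tsum_congr fun z => by ring

lemma chaos_tau_one (v : U d i → U d j → ℝ) (k : Fin d) (ω : Env d) :
    chaos v (tau k 1 ω)
      = ∑' z, chi ω (diagShift k z).1 * chi ω (diagShift k z).2 * v z.1 z.2 :=
  chaos_eq_tsum_mul v _

lemma chaos_tau_neg_one (v : U d i → U d j → ℝ) (k : Fin d) (ω : Env d) :
    chaos v (tau k (-1) ω)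
      = ∑' z, chi ω ((diagShift k).symm z).1 * chi ω ((diagShift k).symm z).2 * v z.1 z.2 :=
  chaos_eq_tsum_mul v _

lemma S_chaos (hv : Summable (Function.uncurry v)) : S (chaos v) = chaos (diagLaplacian v) := by
  funext ω
  let K (z : U d i × U d j) : ℝ := chi ω z.1 * chi ω z.2
  have hK (z : U d i × U d j) : ‖K z‖ ≤ 1 := by
    rw [norm_mul, Real.norm_eq_abs, Real.norm_eq_abs, abs_chi, abs_chi, one_mul]
  calc S (chaos v) ω
      = (1 / 2) * ∑ k, (∑' z, K (diagShift k z) * v z.1 z.2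
          + ∑' z, K ((diagShift k).symm z) * v z.1 z.2 - 2 * ∑' z, K z * v z.1 z.2) := by
        simp only [S, chaos_tau_one, chaos_tau_neg_one, chaos_eq_tsum_mul v ω, K]
    _ = ∑' z, laplacian diagShift K z * v z.1 z.2 := (tsum_laplacian_mul diagShift hK hv).symm
    _ = ∑' z, K z * diagLaplacian v z.1 z.2 := (tsum_mul_laplacian diagShift hK hv).symm
    _ = chaos (diagLaplacian v) ω := (chaos_eq_tsum_mul _ ω).symm

theorem stmt7_general (hv : Summable (Function.uncurry v))
    (hvstar : Summable (Function.uncurry vstar))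
    (hft : ∀ p ∈ box d, ∀ q ∈ box d, vhat vstar p q
      = -(1 / 2) * (dhat (Function.update p i 0 + Function.update q j 0) : ℂ) * vhat v p q) :
    S (chaos v) = chaos vstar := by
  have hvstar_eq : vstar = diagLaplacian v :=
    eq_of_vhat_eqOn_box hvstar (summable_diagLaplacian hv) fun p hp q hq =>
      (hft p hp q hq).trans (vhat_diagLaplacian hv p q).symm
  rw [hvstar_eq, S_chaos hv]

end Chaos

/-- For `i ≠ j`, summable `v : U_i × U_j → ℝ` and
`ζ(ω) = Σ_{x,y} v(x,y) ω(i,x) ω(j,y)`, one has `Sζ = Σ_{x,y} v*(x,y) ω(i,x) ω(j,y)` in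
`L²(Ω,π)`, where `v*` is the square-summable function whose Fourier transform satisfies
`v̂*(p,q) = −(1/2) d̂(p^{(i)} + q^{(j)}) v̂(p,q)` for all `p, q ∈ 𝕋^d`. -/
theorem stmt7 (d : ℕ) (hd : 2 ≤ d) (μ : Measure (Env d)) (hμ : IsEnvMeasure μ)
    (i j : Fin d) (hij : i ≠ j) (v : U d i → U d j → ℝ)
    (hv : Summable fun z : U d i × U d j => v z.1 z.2)
    (ζ : Env d → ℝ) (hζdef : ∀ ω, ζ ω = ∑' z : U d i × U d j, v z.1 z.2 * chi ω z.1 * chi ω z.2)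
    (vstar : U d i → U d j → ℝ)
    (hvstar_sq : Summable fun z : U d i × U d j => (vstar z.1 z.2) ^ 2)
    (hvstar_sum : Summable fun z : U d i × U d j => vstar z.1 z.2)
    (hft : ∀ p q : Fin d → ℝ,
      vhat vstar p q
        = -(1 / 2 : ℂ) * ((dhat (Function.update p i 0 + Function.update q j 0) : ℝ) : ℂ)
            * vhat v p q) :
    S ζ =ᵐ[μ] fun ω => ∑' z : U d i × U d j, vstar z.1 z.2 * chi ω z.1 * chi ω z.2 := by
  obtain rfl : ζ = chaos v := funext hζdef
  exact .of_eq (stmt7_general hv hvstar_sum fun p _ q _ => hft p q)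

end RWOML
end
end

section
/- Let d = 3. There exists a finite constant C such that for all p ∈ 𝕋³ and all 0 < λ ≤ 1/3, (2π)^{−3} ∫_{𝕋³} (λ + (1/2) d̂(q^{(2)} + p^{(1)}))^{−1} dq ≤ C |log(λ + (1/2) sin²(p_2/2))|. -/
open MeasureTheory Real Filter Topology Finset

noncomputable section

namespace RWOML

/-!
Replacing `q_j` by `0` in `q + y` freezes one summand of `d̂` at `4 sin²(y_j / 2)`. Keeping this
summand and those of two free coordinates bounds the average over `𝕋^d` by the average of
`(m + sin²(θ/2) + sin²(η/2))⁻¹` over two independent uniform angles, where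
`m = λ + ½ sin²(y_j / 2)`; by periodicity all translations disappear. Jordan's inequality
`|x| / π ≤ |sin (x / 2)|` replaces each sine by a linear function. Integrating out `η` gives an
arctangent of size `m_θ^(-1/2)` with `m_θ = m + sin²(θ/2)`, and integrating this over `θ` gives
`arsinh (m^(-1/2))`, which is of order `|log m|` as long as `m` stays away from `1`.
-/

section Integrals

lemma div_pi_sq_le_sin_half_sq {x : ℝ} (hx : |x| ≤ π) : (x / π) ^ 2 ≤ sin (x / 2) ^ 2 := by
  have hx' : |x / 2| ≤ π / 2 := by
    rw [abs_div, abs_two]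
    gcongr
  refine sq_le_sq.2 ?_
  calc |x / π| = 2 / π * |x / 2| := by
        rw [abs_div, abs_div, abs_two, abs_of_pos pi_pos]
        ring
    _ ≤ |sin (x / 2)| := mul_abs_le_abs_sin hx'

lemma integral_inv_sqrt_sq_add_sq {c : ℝ} (hc : 0 < c) (a b : ℝ) :
    ∫ x in a..b, (√(c ^ 2 + x ^ 2))⁻¹ = arsinh (b / c) - arsinh (a / c) := by
  have hcont : Continuous fun x : ℝ => (√(c ^ 2 + x ^ 2))⁻¹ :=
    Continuous.inv₀ (by fun_prop) fun x => by positivity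
  refine intervalIntegral.integral_eq_sub_of_hasDerivAt (f := fun x => arsinh (x / c))
    (fun x _ => ?_) (hcont.intervalIntegrable a b)
  refine ((hasDerivAt_id x).div_const c).arsinh.congr_deriv ?_
  have hfactor : c ^ 2 + x ^ 2 = c ^ 2 * (1 + (x / c) ^ 2) := by field_simp
  rw [hfactor, sqrt_mul (sq_nonneg c), sqrt_sq hc.le, mul_inv, smul_eq_mul, id, mul_comm, one_div]

lemma arsinh_inv_sqrt_le {m : ℝ} (hm : 0 < m) (hm1 : m ≤ 1) :
    arsinh (√m)⁻¹ ≤ log 3 + |log m| / 2 := by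
  have hs : 1 ≤ (√m)⁻¹ := (one_le_inv₀ (sqrt_pos.2 hm)).2 (sqrt_le_one.2 hm1)
  have hsqrt : √(1 + (√m)⁻¹ ^ 2) ≤ 2 * (√m)⁻¹ := by
    rw [sqrt_le_left (by positivity)]
    nlinarith
  calc arsinh (√m)⁻¹ ≤ log (3 * (√m)⁻¹) := log_le_log (by positivity) (by linarith)
    _ = log 3 + |log m| / 2 := by
        rw [log_mul (by norm_num) (by positivity), log_inv, log_sqrt hm.le,
          abs_of_nonpos (log_nonpos hm.le hm1), neg_div]

end Integrals

section Antitone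

variable {φ : ℝ → ℝ}

lemma integrable_comp_of_antitoneOn {α : Type*} [MeasurableSpace α] {μ : Measure α}
    [IsFiniteMeasure μ] (hφ : AntitoneOn φ (Set.Ici 0)) (hφ0 : ∀ s, 0 ≤ s → 0 ≤ φ s)
    {g : α → ℝ} (hg : Measurable g) (hg0 : ∀ x, 0 ≤ g x) :
    Integrable (fun x => φ (g x)) μ := by
  have hanti : Antitone fun s => φ (max 0 s) := fun s t hst =>
    hφ (le_max_left 0 s) (le_max_left 0 t) (max_le_max le_rfl hst)
  have hmeas : Measurable fun x => φ (g x) := by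
    simpa only [Function.comp_def, max_eq_right (hg0 _)] using hanti.measurable.comp hg
  refine .of_bound hmeas.aestronglyMeasurable (φ 0) (.of_forall fun x => ?_)
  rw [norm_of_nonneg (hφ0 _ (hg0 x))]
  exact hφ Set.self_mem_Ici (hg0 x) (hg0 x)

lemma antitoneOn_inv_const_add {c : ℝ} (hc : 0 < c) :
    AntitoneOn (fun s => (c + s)⁻¹) (Set.Ici 0) := fun s hs t _ hst =>
  inv_anti₀ (add_pos_of_pos_of_nonneg hc hs) (by gcongr)

lemma antitoneOn_inv_sqrt_const_add {c : ℝ} (hc : 0 < c) :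
    AntitoneOn (fun s => (√(c + s))⁻¹) (Set.Ici 0) := fun s hs t _ hst =>
  inv_anti₀ (sqrt_pos.2 (add_pos_of_pos_of_nonneg hc hs)) (by gcongr)

end Antitone

section UniformAngle

/-- The uniform probability measure on the circle `ℝ / 2πℤ`, realised on its fundamental domain
`[0, 2π)`. Its powers turn the normalised integrals over `box d` into expectations. -/
def uniformAngle : Measure ℝ := ProbabilityTheory.cond volume (Set.Ico 0 (2 * π))

instance : IsProbabilityMeasure uniformAngle :=
  ProbabilityTheory.cond_isProbabilityMeasure_of_finite (by simp [pi_pos])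
    measure_Ico_lt_top.ne

lemma pi_cond {ι : Type*} [Fintype ι] {X : ι → Type*} [∀ i, MeasurableSpace (X i)]
    (μ : ∀ i, Measure (X i)) [∀ i, SigmaFinite (μ i)] {s : ∀ i, Set (X i)}
    (hs : ∀ i, μ i (s i) ≠ 0) :
    Measure.pi (fun i => ProbabilityTheory.cond (μ i) (s i)) =
      ProbabilityTheory.cond (Measure.pi μ) (Set.univ.pi s) := by
  refine Measure.pi_eq fun t ht => ?_
  rw [ProbabilityTheory.cond_apply' (.univ_pi ht), ← Set.pi_inter_distrib, Measure.pi_pi,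
    Measure.pi_pi, ENNReal.prod_inv_distrib fun i _ j _ _ => .inl (hs i), ← prod_mul_distrib]
  simp_rw [ProbabilityTheory.cond_apply' (ht _)]

lemma integral_pi_uniformAngle {d : ℕ} (f : (Fin d → ℝ) → ℝ) :
    ∫ q, f q ∂Measure.pi (fun _ => uniformAngle) = ((2 * π) ^ d)⁻¹ * ∫ q in box d, f q := by
  have hpos : volume (Set.Ico 0 (2 * π)) ≠ 0 := by simp [pi_pos]
  have hvol : (volume (box d)).toReal = (2 * π) ^ d := by
    simp [box, volume_pi, pi_pos.le]
  unfold uniformAngle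
  rw [pi_cond (fun _ => volume) fun _ => hpos, ← volume_pi, ← box, ProbabilityTheory.cond,
    integral_smul_measure, ENNReal.toReal_inv, hvol, smul_eq_mul]

lemma integral_uniformAngle_comp_add {f : ℝ → ℝ} (hf : Function.Periodic f (2 * π)) (t : ℝ) :
    ∫ x, f (x + t) ∂uniformAngle = (2 * π)⁻¹ * ∫ x in -π..π, f x := by
  have hshift : ∫ x in Set.Ico 0 (2 * π), f (x + t) = ∫ x in -π..π, f x := by
    rw [integral_Ico_eq_integral_Ioc, ← intervalIntegral.integral_of_le two_pi_pos.le,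
      intervalIntegral.integral_comp_add_right, zero_add, add_comm (2 * π),
      hf.intervalIntegral_add_eq t (-π)]
    ring_nf
  rw [uniformAngle, ProbabilityTheory.cond, integral_smul_measure, hshift]
  simp [pi_pos.le]

lemma integral_uniformAngle_comp_sin_half_sq_le {φ : ℝ → ℝ} (hφ : AntitoneOn φ (Set.Ici 0))
    (hφ0 : ∀ s, 0 ≤ s → 0 ≤ φ s) (t : ℝ) :
    ∫ x, φ (sin ((x + t) / 2) ^ 2) ∂uniformAngle ≤ (∫ u in (-1)..1, φ (u ^ 2)) / 2 := by
  have hper : Function.Periodic (fun x => φ (sin (x / 2) ^ 2)) (2 * π) := fun x => by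
    simp only [add_div, mul_div_cancel_left₀ π two_ne_zero, sin_add_pi, neg_sq]
  have hφ_int {g : ℝ → ℝ} (hg : Measurable g) :
      IntervalIntegrable (fun x => φ (g x ^ 2)) volume (-π) π :=
    (intervalIntegrable_iff_integrableOn_Ioc_of_le (by linarith [pi_pos])).2 <|
      integrable_comp_of_antitoneOn hφ hφ0 (hg.pow_const 2) fun x => sq_nonneg _
  calc ∫ x, φ (sin ((x + t) / 2) ^ 2) ∂uniformAngle
      = (2 * π)⁻¹ * ∫ x in -π..π, φ (sin (x / 2) ^ 2) := integral_uniformAngle_comp_add hper t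
    _ ≤ (2 * π)⁻¹ * ∫ x in -π..π, φ ((x / π) ^ 2) := by
        gcongr
        refine intervalIntegral.integral_mono_on (by linarith [pi_pos]) (hφ_int (by fun_prop))
          (hφ_int (by fun_prop)) fun x hx => ?_
        exact hφ (Set.mem_Ici.2 (sq_nonneg _)) (Set.mem_Ici.2 (sq_nonneg _))
          (div_pi_sq_le_sin_half_sq (abs_le.2 hx))
    _ = (∫ u in (-1)..1, φ (u ^ 2)) / 2 := by
        rw [intervalIntegral.integral_comp_div (fun u => φ (u ^ 2)) pi_ne_zero, neg_div,
          div_self pi_ne_zero, smul_eq_mul]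
        field_simp

lemma integral_uniformAngle_inv_add_sin_half_sq_le {b : ℝ} (hb : 0 < b) (t : ℝ) :
    ∫ x, (b + sin ((x + t) / 2) ^ 2)⁻¹ ∂uniformAngle ≤ π / 2 * (√b)⁻¹ := by
  have hs : 0 < √b := sqrt_pos.2 hb
  calc ∫ x, (b + sin ((x + t) / 2) ^ 2)⁻¹ ∂uniformAngle
      ≤ (∫ u in (-1)..1, (√b ^ 2 + u ^ 2)⁻¹) / 2 := by
        rw [sq_sqrt hb.le]
        exact integral_uniformAngle_comp_sin_half_sq_le (antitoneOn_inv_const_add hb)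
          (fun s hs => by positivity) t
    _ = arctan (1 / √b) * (√b)⁻¹ := by
        rw [integral_inv_sq_add_sq hs.ne', neg_div, arctan_neg]
        ring
    _ ≤ π / 2 * (√b)⁻¹ := by
        gcongr
        exact (arctan_lt_pi_div_two _).le

lemma integral_uniformAngle_inv_sqrt_add_sin_half_sq_le {m : ℝ} (hm : 0 < m) (t : ℝ) :
    ∫ x, (√(m + sin ((x + t) / 2) ^ 2))⁻¹ ∂uniformAngle ≤ arsinh (√m)⁻¹ := by
  calc ∫ x, (√(m + sin ((x + t) / 2) ^ 2))⁻¹ ∂uniformAngle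
      ≤ (∫ u in (-1)..1, (√(√m ^ 2 + u ^ 2))⁻¹) / 2 := by
        rw [sq_sqrt hm.le]
        exact integral_uniformAngle_comp_sin_half_sq_le (antitoneOn_inv_sqrt_const_add hm)
          (fun s hs => by positivity) t
    _ = arsinh (√m)⁻¹ := by
        rw [integral_inv_sqrt_sq_add_sq (sqrt_pos.2 hm), neg_div, arsinh_neg, one_div]
        ring

lemma integral_uniformAngle_prod_inv_le {m : ℝ} (hm : 0 < m) (s t : ℝ) :
    ∫ z, (m + (sin ((z.1 + s) / 2) ^ 2 + sin ((z.2 + t) / 2) ^ 2))⁻¹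
      ∂(uniformAngle.prod uniformAngle) ≤ π / 2 * arsinh (√m)⁻¹ := by
  have hf_int : Integrable
      (fun z : ℝ × ℝ => (m + (sin ((z.1 + s) / 2) ^ 2 + sin ((z.2 + t) / 2) ^ 2))⁻¹)
      (uniformAngle.prod uniformAngle) :=
    integrable_comp_of_antitoneOn (antitoneOn_inv_const_add hm) (fun r hr => by positivity)
      (by fun_prop) fun z => by positivity
  have hsqrt_int : Integrable (fun x => (√(m + sin ((x + s) / 2) ^ 2))⁻¹) uniformAngle :=
    integrable_comp_of_antitoneOn (antitoneOn_inv_sqrt_const_add hm) (fun r hr => by positivity)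
      (by fun_prop) fun x => by positivity
  calc _ = ∫ x, ∫ y, (m + (sin ((x + s) / 2) ^ 2 + sin ((y + t) / 2) ^ 2))⁻¹
          ∂uniformAngle ∂uniformAngle := integral_prod _ hf_int
    _ ≤ ∫ x, π / 2 * (√(m + sin ((x + s) / 2) ^ 2))⁻¹ ∂uniformAngle := by
        refine integral_mono hf_int.integral_prod_left (hsqrt_int.const_mul _) fun x => ?_
        simp only [← add_assoc]
        exact integral_uniformAngle_inv_add_sin_half_sq_le (by positivity) t
    _ ≤ π / 2 * arsinh (√m)⁻¹ := by
        rw [integral_const_mul]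
        gcongr
        exact integral_uniformAngle_inv_sqrt_add_sin_half_sq_le hm s

end UniformAngle

section Torus

lemma measurePreserving_eval_prodMk {ι : Type*} [Fintype ι] {X : ι → Type*}
    [∀ i, MeasurableSpace (X i)] (μ : ∀ i, Measure (X i)) [∀ i, IsProbabilityMeasure (μ i)]
    {i j : ι} (hij : i ≠ j) :
    MeasurePreserving (fun x : ∀ k, X k => (x i, x j)) (Measure.pi μ) ((μ i).prod (μ j)) := by
  have hindep := (ProbabilityTheory.iIndepFun_pi (μ := μ) (X := fun _ => id)
    fun _ => aemeasurable_id).indepFun hij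
  refine ⟨by fun_prop, ?_⟩
  rw [← (measurePreserving_eval μ i).map_eq, ← (measurePreserving_eval μ j).map_eq]
  exact hindep.map_prod_eq_prod_map_map (measurable_pi_apply i).aemeasurable
    (measurable_pi_apply j).aemeasurable

variable {d : ℕ}

lemma sum_four_mul_sin_sq_le_dhat (s : Finset (Fin d)) (p : Fin d → ℝ) :
    ∑ k ∈ s, 4 * sin (p k / 2) ^ 2 ≤ dhat p :=
  sum_le_univ_sum_of_nonneg fun _ => by positivity

lemma integral_pi_inv_add_two_sin_half_sq_le {a b : Fin d} (hab : a ≠ b) {m : ℝ} (hm : 0 < m)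
    (y : Fin d → ℝ) :
    ∫ q, (m + (sin ((q a + y a) / 2) ^ 2 + sin ((q b + y b) / 2) ^ 2))⁻¹
      ∂Measure.pi (fun _ => uniformAngle) ≤ π / 2 * arsinh (√m)⁻¹ := by
  have hmp := measurePreserving_eval_prodMk (fun _ : Fin d => uniformAngle) hab
  have hmeas : Measurable fun z : ℝ × ℝ =>
      (m + (sin ((z.1 + y a) / 2) ^ 2 + sin ((z.2 + y b) / 2) ^ 2))⁻¹ := by fun_prop
  have hmarginal := integral_map hmp.aemeasurable hmeas.aestronglyMeasurable
  rw [hmp.map_eq] at hmarginal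
  exact hmarginal.symm.trans_le (integral_uniformAngle_prod_inv_le hm _ _)

lemma integral_pi_inv_add_half_dhat_update_le (hd : 3 ≤ d) (j : Fin d) (y : Fin d → ℝ)
    {lam : ℝ} (hlam : 0 < lam) :
    ∫ q, (lam + 1 / 2 * dhat (Function.update q j 0 + y))⁻¹ ∂Measure.pi (fun _ => uniformAngle) ≤
      π / 2 * arsinh (√(lam + 1 / 2 * sin (y j / 2) ^ 2))⁻¹ := by
  obtain ⟨a, ha, b, hb, hab⟩ : ∃ a ∈ univ.erase j, ∃ b ∈ univ.erase j, a ≠ b :=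
    one_lt_card.1 (by simp; omega)
  replace ha := ne_of_mem_erase ha
  replace hb := ne_of_mem_erase hb
  set m := lam + 1 / 2 * sin (y j / 2) ^ 2 with hm_def
  have hm : 0 < m := by positivity
  have hdhat (q : Fin d → ℝ) : m + (sin ((q a + y a) / 2) ^ 2 + sin ((q b + y b) / 2) ^ 2) ≤
      lam + 1 / 2 * dhat (Function.update q j 0 + y) := by
    have hsum := sum_four_mul_sin_sq_le_dhat {j, a, b} (Function.update q j 0 + y)
    rw [sum_insert (by simp [ha.symm, hb.symm]), sum_pair hab] at hsum
    simp only [Pi.add_apply, Function.update_self, Function.update_of_ne ha,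
      Function.update_of_ne hb, zero_add] at hsum
    linarith [sq_nonneg (sin (y j / 2)), sq_nonneg (sin ((q a + y a) / 2)),
      sq_nonneg (sin ((q b + y b) / 2))]
  calc _ ≤ ∫ q, (m + (sin ((q a + y a) / 2) ^ 2 + sin ((q b + y b) / 2) ^ 2))⁻¹
          ∂Measure.pi (fun _ => uniformAngle) := by
        refine integral_mono_of_nonneg (.of_forall fun q => ?_)
          (integrable_comp_of_antitoneOn (antitoneOn_inv_const_add hm)
            (fun r hr => by positivity) (by fun_prop) fun q => by positivity)
          (.of_forall fun q => inv_anti₀ (by positivity) (hdhat q))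
        exact inv_nonneg.2 (le_trans (by positivity) (hdhat q))
    _ ≤ π / 2 * arsinh (√m)⁻¹ := integral_pi_inv_add_two_sin_half_sq_le hab hm y

end Torus

theorem stmt10_general {d : ℕ} (hd : 3 ≤ d) (j : Fin d) {Λ : ℝ} (hΛ : Λ < 1 / 2) :
    ∃ C : ℝ, 0 < C ∧ ∀ (y : Fin d → ℝ) (lam : ℝ), 0 < lam → lam ≤ Λ →
      ((2 * π) ^ d)⁻¹ * ∫ q in box d, (lam + 1 / 2 * dhat (Function.update q j 0 + y))⁻¹ ≤
        C * |log (lam + 1 / 2 * sin (y j / 2) ^ 2)| := by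
  set M := Λ + 1 / 2 with hM_def
  refine ⟨π / 2 * (log 3 / |log M| + 1 / 2), by positivity, fun y lam hlam hlamΛ => ?_⟩
  set m := lam + 1 / 2 * sin (y j / 2) ^ 2 with hm_def
  have hm : 0 < m := by positivity
  have hmM : m ≤ M := by linarith [sin_sq_le_one (y j / 2)]
  have hM : 0 < |log M| := abs_pos.2 (log_neg (hm.trans_le hmM) (by linarith)).ne
  have hlog : |log M| ≤ |log m| := by
    rw [abs_of_neg (log_neg (by linarith) (by linarith)),
      abs_of_neg (log_neg hm (by linarith))]
    exact neg_le_neg (log_le_log hm hmM)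
  calc _ ≤ π / 2 * arsinh (√m)⁻¹ := by
        rw [← integral_pi_uniformAngle]
        exact integral_pi_inv_add_half_dhat_update_le hd j y hlam
    _ ≤ π / 2 * (log 3 + |log m| / 2) := by
        gcongr
        exact arsinh_inv_sqrt_le hm (by linarith)
    _ ≤ π / 2 * (log 3 / |log M| * |log m| + |log m| / 2) := by
        gcongr
        rw [div_mul_eq_mul_div, le_div_iff₀ hM]
        gcongr
    _ = π / 2 * (log 3 / |log M| + 1 / 2) * |log m| := by ring

/-- `d = 3`: There is `C < ∞` with, for all `p ∈ 𝕋³` and `0 < λ ≤ 1/3`,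
`(2π)^{−3} ∫_{𝕋³} (λ + (1/2) d̂(q^{(2)}+p^{(1)}))^{−1} dq ≤ C |log(λ + (1/2) sin²(p_2/2))|`. -/
theorem stmt10 :
    ∃ C : ℝ, 0 < C ∧ ∀ p ∈ box 3, ∀ lam : ℝ, 0 < lam → lam ≤ 1 / 3 →
      ((2 * Real.pi) ^ 3)⁻¹ *
          ∫ q in box 3, (lam + (1 / 2) * dhat (Function.update q 1 0 + Function.update p 0 0))⁻¹
        ≤ C * |Real.log (lam + (1 / 2) * Real.sin (p 1 / 2) ^ 2)| := by
  obtain ⟨C, hC, hbound⟩ := stmt10_general le_rfl (1 : Fin 3) (Λ := 1 / 3) (by norm_num)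
  exact ⟨C, hC, fun p _ => by simpa using hbound (Function.update p 0 0)⟩

end RWOML
end
end

section
/- For every constant C > 0 there exist C' > 0 and λ₀ > 0 such that for all 0 < λ < λ₀, (1/(2π)) ∫_0^{2π} (λ + 4 sin²(t/2) + C λ^{−1/2} sin²(t))^{−1} dt ≥ C' λ^{−1/4}. -/
open MeasureTheory Real Filter Topology Finset

noncomputable section

namespace RWOML

/-!
Since `|sin x| ≤ |x|`, the denominator is at most the parabola `λ + (1 + C λ^{-1/2}) t²`, whose
reciprocal integrates to an arctangent. The peak `(a + b t²)⁻¹` has height `a⁻¹` and width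
`(a / b)^{1/2}`, hence mass of order `(a b)^{-1/2}`; here `a b` is of order
`λ · λ^{-1/2} = λ^{1/2}`.
-/

theorem integral_inv_sq_add_mul_sq {p q : ℝ} (hp : p ≠ 0) (hq : q ≠ 0) (x y : ℝ) :
    ∫ t in x..y, (p ^ 2 + (q * t) ^ 2)⁻¹ =
      (p * q)⁻¹ * (arctan (q * y / p) - arctan (q * x / p)) := by
  rw [intervalIntegral.integral_comp_mul_left (fun u => (p ^ 2 + u ^ 2)⁻¹) hq,
    integral_inv_sq_add_sq hp, smul_eq_mul, ← mul_assoc, mul_inv_rev]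

theorem pi_div_four_mul_le_integral_inv_of_le {g : ℝ → ℝ} {p q L : ℝ} (hp : 0 < p)
    (hq : 0 < q) (hpL : p ≤ q * L)
    (hg : IntervalIntegrable (fun t => (g t)⁻¹) volume 0 L)
    (hg_pos : ∀ t ∈ Set.Icc 0 L, 0 < g t)
    (hg_le : ∀ t ∈ Set.Icc 0 L, g t ≤ p ^ 2 + (q * t) ^ 2) :
    π / (4 * (p * q)) ≤ ∫ t in (0 : ℝ)..L, (g t)⁻¹ := by
  have hL : 0 < L := pos_of_mul_pos_right (hp.trans_le hpL) hq.le
  have parabola_inv_continuous : Continuous fun t : ℝ => (p ^ 2 + (q * t) ^ 2)⁻¹ :=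
    Continuous.inv₀ (by fun_prop) fun t => by positivity
  have pi_div_four_le_arctan : π / 4 ≤ arctan (q * L / p) := by
    rw [← arctan_one]
    exact arctan_mono ((one_le_div hp).mpr hpL)
  calc π / (4 * (p * q)) = (p * q)⁻¹ * (π / 4) := by field_simp
    _ ≤ (p * q)⁻¹ * arctan (q * L / p) := by gcongr
    _ = ∫ t in (0 : ℝ)..L, (p ^ 2 + (q * t) ^ 2)⁻¹ := by
      rw [integral_inv_sq_add_mul_sq hp.ne' hq.ne', mul_zero, zero_div, arctan_zero, sub_zero]
    _ ≤ ∫ t in (0 : ℝ)..L, (g t)⁻¹ :=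
      intervalIntegral.integral_mono_on hL.le
        (parabola_inv_continuous.intervalIntegrable _ _) hg
        fun t ht => inv_anti₀ (hg_pos t ht) (hg_le t ht)

theorem four_mul_sin_half_sq_add_mul_sin_sq_le {b : ℝ} (hb : 0 ≤ b) (t : ℝ) :
    4 * sin (t / 2) ^ 2 + b * sin t ^ 2 ≤ (1 + b) * t ^ 2 := by
  calc 4 * sin (t / 2) ^ 2 + b * sin t ^ 2 ≤ 4 * (t / 2) ^ 2 + b * t ^ 2 := by
        gcongr 4 * ?_ + b * ?_ <;> exact sin_sq_le_sq
    _ = (1 + b) * t ^ 2 := by ring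

theorem pi_div_four_mul_sqrt_le_integral_inv {a b : ℝ} (ha : 0 < a) (hb : 0 ≤ b)
    (hab : a ≤ (1 + b) * (2 * π) ^ 2) :
    π / (4 * √(a * (1 + b))) ≤
      ∫ t in (0 : ℝ)..(2 * π), (a + 4 * sin (t / 2) ^ 2 + b * sin t ^ 2)⁻¹ := by
  have denominator_pos (t : ℝ) : 0 < a + 4 * sin (t / 2) ^ 2 + b * sin t ^ 2 := by positivity
  have integrand_continuous :
      Continuous fun t : ℝ => (a + 4 * sin (t / 2) ^ 2 + b * sin t ^ 2)⁻¹ :=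
    Continuous.inv₀ (by fun_prop) fun t => (denominator_pos t).ne'
  rw [sqrt_mul ha.le]
  refine pi_div_four_mul_le_integral_inv_of_le (sqrt_pos.mpr ha)
    (sqrt_pos.mpr (by positivity)) ?_ (integrand_continuous.intervalIntegrable _ _)
    (fun t _ => denominator_pos t) fun t _ => ?_
  · rw [sqrt_le_left (by positivity), mul_pow, sq_sqrt (by positivity)]
    exact hab
  · rw [mul_pow, sq_sqrt ha.le, sq_sqrt (by positivity), add_assoc]
    gcongr
    exact four_mul_sin_half_sq_add_mul_sin_sq_le hb t

theorem sqrt_mul_one_add_mul_rpow_neg_half_le (C : ℝ) {x : ℝ} (hx : 0 < x) (hx_one : x ≤ 1) :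
    √(x * (1 + C * x ^ (-(1 / 2) : ℝ))) ≤ √(1 + C) * x ^ (1 / 4 : ℝ) := by
  have mul_rpow_neg_half : x * x ^ (-(1 / 2) : ℝ) = √x := by
    rw [rpow_neg hx.le, ← sqrt_eq_rpow, ← div_eq_mul_inv, div_sqrt]
  have sqrt_sqrt_eq_rpow : √√x = x ^ (1 / 4 : ℝ) := by
    rw [sqrt_eq_rpow, sqrt_eq_rpow, ← rpow_mul hx.le]
    norm_num
  have le_sqrt_self : x ≤ √x := le_sqrt_of_sq_le (pow_le_of_le_one hx.le hx_one two_ne_zero)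
  calc √(x * (1 + C * x ^ (-(1 / 2) : ℝ))) = √(x + C * √x) := by
        rw [← mul_rpow_neg_half]
        ring_nf
    _ ≤ √((1 + C) * √x) := sqrt_le_sqrt (by linarith)
    _ = √(1 + C) * x ^ (1 / 4 : ℝ) := by
      rw [sqrt_mul' _ (sqrt_nonneg x), sqrt_sqrt_eq_rpow]

/-- For every `C > 0` there are `C' > 0` and `λ₀ > 0` such that for `0 < λ < λ₀`,
`(1/(2π)) ∫_0^{2π} (λ + 4 sin²(t/2) + C λ^{−1/2} sin²(t))^{−1} dt ≥ C' λ^{−1/4}`. -/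
theorem stmt13 (C : ℝ) (hC : 0 < C) :
    ∃ C' > (0 : ℝ), ∃ lam₀ > (0 : ℝ), ∀ lam : ℝ, 0 < lam → lam < lam₀ →
      C' * lam ^ (-(1 / 4) : ℝ) ≤
        (2 * Real.pi)⁻¹ *
          ∫ t in (0 : ℝ)..(2 * Real.pi),
            (lam + 4 * Real.sin (t / 2) ^ 2 + C * lam ^ (-(1 / 2) : ℝ) * Real.sin t ^ 2)⁻¹ := by
  refine ⟨(8 * √(1 + C))⁻¹, by positivity, 1, one_pos, fun lam lam_pos lam_lt_one => ?_⟩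
  have coeff_nonneg : 0 ≤ C * lam ^ (-(1 / 2) : ℝ) := by positivity
  have width_le : lam ≤ (1 + C * lam ^ (-(1 / 2) : ℝ)) * (2 * π) ^ 2 :=
    lam_lt_one.le.trans <| one_le_mul_of_one_le_of_one_le (by linarith)
      (one_le_pow₀ (by linarith [pi_gt_three]))
  calc (8 * √(1 + C))⁻¹ * lam ^ (-(1 / 4) : ℝ)
      = (8 * (√(1 + C) * lam ^ (1 / 4 : ℝ)))⁻¹ := by
        rw [rpow_neg lam_pos.le, ← mul_inv, mul_assoc]
    _ ≤ (8 * √(lam * (1 + C * lam ^ (-(1 / 2) : ℝ))))⁻¹ := by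
        gcongr
        exact sqrt_mul_one_add_mul_rpow_neg_half_le C lam_pos lam_lt_one.le
    _ = (2 * π)⁻¹ * (π / (4 * √(lam * (1 + C * lam ^ (-(1 / 2) : ℝ))))) := by
        field_simp
        norm_num
    _ ≤ _ := by
        gcongr
        exact pi_div_four_mul_sqrt_le_integral_inv lam_pos coeff_nonneg width_le

end RWOML
end
end

section
/- For every constant C > 0 there exist C' > 0 and λ₀ ∈ (0, 1/3] such that for all 0 < λ < λ₀, (2π)^{−3} ∫_{𝕋³} (λ + d̂(p^{(1)}) + C Σ_{j=2}^3 |log(λ + (1/2) sin²(p_j/2))| sin²(p_j))^{−1} dp ≥ C' log log(λ^{−1}). -/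
open MeasureTheory Real Filter Topology Finset

noncomputable section

namespace RWOML

/-!
Where both transverse coordinates lie in `[r / 2, r)`, with `λ ≤ r²` and `r` bounded away from `1`,
the denominator is at most a constant times `r² log (1 / r)`. This region has volume `(r / 2)²`, so
it contributes at least a constant times `1 / log (1 / r)` to the integral. The scales `r = 2^{-k}`
with `4^{-k} ≥ λ` give disjoint regions, the `k`-th contributing at least a constant times `1 / k`,
and the harmonic sum over `1 ≤ k ≤ log (1 / λ) / 2` is of order `log log (1 / λ)`.
-/

lemma log_add_one_le_sum_inv (n : ℕ) : Real.log (n + 1) ≤ ∑ k ∈ Finset.Icc 1 n, (k : ℝ)⁻¹ := by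
  have h := log_add_one_le_harmonic n
  rw [harmonic_eq_sum_Icc] at h
  push_cast at h
  exact h

lemma log_eight_pi_sq_div_sq_nonneg {r : ℝ} (hr : 0 < r) (hrπ : r ≤ π) :
    0 ≤ Real.log (8 * π ^ 2 / r ^ 2) := by
  refine Real.log_nonneg ((one_le_div (by positivity)).2 ?_)
  have hsq : r ^ 2 ≤ π ^ 2 := by gcongr
  linarith [sq_nonneg π]

lemma half_pow_le_pi (k : ℕ) : (1 / 2 : ℝ) ^ k ≤ π :=
  (pow_le_one₀ (by norm_num) (by norm_num)).trans (by linarith [Real.pi_gt_three])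

lemma log_eight_pi_sq_div_half_pow_sq_le {k : ℕ} (hk : 1 ≤ k) :
    Real.log (8 * π ^ 2 / ((1 / 2) ^ k) ^ 2) ≤ 9 * k := by
  have hk' : (1 : ℝ) ≤ k := by exact_mod_cast hk
  have hle : 8 * π ^ 2 / ((1 / 2) ^ k) ^ 2 ≤ 2 ^ (2 * k + 7) :=
    calc 8 * π ^ 2 / ((1 / 2) ^ k) ^ 2 ≤ 8 * 4 ^ 2 / ((1 / 2) ^ k) ^ 2 := by
          gcongr
          exact Real.pi_le_four
      _ = 2 ^ (2 * k + 7) := by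
          rw [one_div_pow, one_div_pow, div_div_eq_mul_div, ← pow_mul]
          ring
  calc Real.log (8 * π ^ 2 / ((1 / 2) ^ k) ^ 2)
      ≤ Real.log (2 ^ (2 * k + 7)) := Real.log_le_log (by positivity) hle
    _ = (2 * k + 7) * Real.log 2 := by rw [Real.log_pow]; push_cast; rfl
    _ ≤ (2 * k + 7) * 1 := by gcongr; linarith [Real.log_two_lt_d9]
    _ ≤ 9 * k := by linarith

lemma half_log_le_log_half {x : ℝ} (hx : 4 ≤ x) : Real.log x / 2 ≤ Real.log (x / 2) := by
  have hsq : x ≤ (x / 2) ^ 2 := by nlinarith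
  have hlog := Real.log_le_log (by linarith) hsq
  rw [Real.log_pow] at hlog
  push_cast at hlog
  linarith

lemma le_half_pow_sq_of_le_half_log_inv {lam : ℝ} {n : ℕ} (hlam : 0 < lam)
    (hn : n ≤ Real.log lam⁻¹ / 2) : lam ≤ ((1 / 2) ^ n) ^ 2 := by
  have hlog : Real.log lam ≤ Real.log (((1 / 2) ^ n) ^ 2) := by
    have hlog_two : n * Real.log 2 ≤ n :=
      mul_le_of_le_one_right n.cast_nonneg (by linarith [Real.log_two_lt_d9])
    rw [Real.log_inv] at hn
    rw [Real.log_pow, Real.log_pow, one_div, Real.log_inv]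
    push_cast
    linarith
  exact (Real.log_le_log_iff hlam (by positivity)).1 hlog

lemma exp_neg_four_le_one_third : Real.exp (-4) ≤ 1 / 3 := by
  rw [Real.exp_neg, ← one_div]
  exact one_div_le_one_div_of_le (by norm_num) (by linarith [Real.add_one_le_exp (4 : ℝ)])

section DisjointPieces

variable {α : Type*} [MeasurableSpace α] {μ : Measure α} {f : α → ℝ} {t : Set α}

lemma sum_setIntegral_le_setIntegral {ι : Type*} {s : ι → Set α} (T : Finset ι)
    (hs : ∀ k ∈ T, MeasurableSet (s k)) (hdisj : (T : Set ι).PairwiseDisjoint s)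
    (hst : ∀ k ∈ T, s k ⊆ t) (hf : IntegrableOn f t μ) (hf₀ : 0 ≤ᵐ[μ.restrict t] f) :
    ∑ k ∈ T, ∫ x in s k, f x ∂μ ≤ ∫ x in t, f x ∂μ := by
  rw [← integral_biUnion_finset T hs hdisj fun k hk => hf.mono_set (hst k hk)]
  exact setIntegral_mono_set hf hf₀ (Set.iUnion₂_subset hst).eventuallyLE

lemma mul_log_add_one_le_setIntegral {s : ℕ → Set α} {c : ℝ} {n : ℕ} (hc : 0 ≤ c)
    (hs : ∀ k ∈ Finset.Icc 1 n, MeasurableSet (s k))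
    (hdisj : (Finset.Icc 1 n : Set ℕ).PairwiseDisjoint s)
    (hst : ∀ k ∈ Finset.Icc 1 n, s k ⊆ t) (hf : IntegrableOn f t μ)
    (hf₀ : 0 ≤ᵐ[μ.restrict t] f)
    (hpiece : ∀ k ∈ Finset.Icc 1 n, c * (k : ℝ)⁻¹ ≤ ∫ x in s k, f x ∂μ) :
    c * Real.log (n + 1) ≤ ∫ x in t, f x ∂μ :=
  calc c * Real.log (n + 1)
      ≤ c * ∑ k ∈ Finset.Icc 1 n, (k : ℝ)⁻¹ :=
        mul_le_mul_of_nonneg_left (log_add_one_le_sum_inv n) hc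
    _ = ∑ k ∈ Finset.Icc 1 n, c * (k : ℝ)⁻¹ := Finset.mul_sum ..
    _ ≤ ∑ k ∈ Finset.Icc 1 n, ∫ x in s k, f x ∂μ := Finset.sum_le_sum hpiece
    _ ≤ ∫ x in t, f x ∂μ :=
        sum_setIntegral_le_setIntegral _ hs hdisj hst hf hf₀

end DisjointPieces

section AxisSymbol

/-- The contribution of a single transverse coordinate `t = p_j` to the denominator of the
integrand. -/
def axisSymbol (C lam t : ℝ) : ℝ :=
  4 * Real.sin (t / 2) ^ 2
    + C * (|Real.log (lam + (1 / 2) * Real.sin (t / 2) ^ 2)| * Real.sin t ^ 2)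

variable {C lam r t : ℝ}

lemma axisSymbol_nonneg (hC : 0 ≤ C) : 0 ≤ axisSymbol C lam t := by
  unfold axisSymbol
  positivity

lemma continuous_axisSymbol (hlam : 0 < lam) : Continuous (axisSymbol C lam) := by
  have hlog : Continuous fun t : ℝ => Real.log (lam + (1 / 2) * Real.sin (t / 2) ^ 2) :=
    Continuous.log (by fun_prop) fun t => by positivity
  unfold axisSymbol
  fun_prop

lemma abs_log_add_half_sin_sq_le (hlam : 0 ≤ lam) (hlam' : lam ≤ 1 / 2) (ht : 0 < t)
    (htπ : t ≤ π) :
    |Real.log (lam + (1 / 2) * Real.sin (t / 2) ^ 2)| ≤ Real.log (2 * π ^ 2 / t ^ 2) := by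
  have hsin : t / π ≤ Real.sin (t / 2) :=
    calc t / π = 2 / π * (t / 2) := by ring
      _ ≤ Real.sin (t / 2) := Real.mul_le_sin (by positivity) (by linarith)
  have hlower : (2 * π ^ 2 / t ^ 2)⁻¹ ≤ lam + (1 / 2) * Real.sin (t / 2) ^ 2 :=
    calc (2 * π ^ 2 / t ^ 2)⁻¹ = (1 / 2) * (t / π) ^ 2 := by field_simp
      _ ≤ (1 / 2) * Real.sin (t / 2) ^ 2 := by gcongr
      _ ≤ lam + (1 / 2) * Real.sin (t / 2) ^ 2 := le_add_of_nonneg_left hlam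
  have hpos : 0 < (2 * π ^ 2 / t ^ 2)⁻¹ := by positivity
  have hupper : lam + (1 / 2) * Real.sin (t / 2) ^ 2 ≤ 1 := by
    linarith [Real.sin_sq_le_one (t / 2)]
  rw [abs_of_nonpos (Real.log_nonpos (hpos.trans_le hlower).le hupper), neg_le, ← Real.log_inv]
  exact Real.log_le_log hpos hlower

lemma axisSymbol_le (hC : 0 ≤ C) (hlam : 0 ≤ lam) (hlam' : lam ≤ 1 / 2) (ht : 0 < t)
    (htπ : t ≤ π) : axisSymbol C lam t ≤ (1 + C * Real.log (2 * π ^ 2 / t ^ 2)) * t ^ 2 := by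
  have hlog := abs_log_add_half_sin_sq_le hlam hlam' ht htπ
  calc axisSymbol C lam t
      ≤ 4 * (t / 2) ^ 2 + C * (Real.log (2 * π ^ 2 / t ^ 2) * t ^ 2) := by
        unfold axisSymbol
        gcongr 4 * ?_ + C * ?_
        · exact Real.sin_sq_le_sq
        · exact mul_le_mul hlog Real.sin_sq_le_sq (sq_nonneg _) ((abs_nonneg _).trans hlog)
    _ = (1 + C * Real.log (2 * π ^ 2 / t ^ 2)) * t ^ 2 := by ring

lemma axisSymbol_le_of_mem_Ico (hC : 0 ≤ C) (hlam : 0 ≤ lam) (hlam' : lam ≤ 1 / 2) (hr : 0 < r)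
    (hrπ : r ≤ π) (ht : t ∈ Set.Ico (r / 2) r) :
    axisSymbol C lam t ≤ (1 + C * Real.log (8 * π ^ 2 / r ^ 2)) * r ^ 2 := by
  have ht₀ : 0 < t := (half_pos hr).trans_le ht.1
  have hlog : Real.log (2 * π ^ 2 / t ^ 2) ≤ Real.log (8 * π ^ 2 / r ^ 2) :=
    Real.log_le_log (by positivity) <|
      calc 2 * π ^ 2 / t ^ 2 ≤ 2 * π ^ 2 / (r / 2) ^ 2 := by gcongr; exact ht.1
        _ = 8 * π ^ 2 / r ^ 2 := by field_simp; ring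
  have hlog₀ := log_eight_pi_sq_div_sq_nonneg hr hrπ
  refine (axisSymbol_le hC hlam hlam' ht₀ (ht.2.le.trans hrπ)).trans ?_
  gcongr
  exact ht.2.le

end AxisSymbol

section ResolventSymbol

variable {d : ℕ} {C lam : ℝ} (i : Fin d)

/-- The denominator of the integrand, in dimension `d` and with `i` as the distinguished
direction; the theorem is about `d = 3` and `i = 0`. -/
def resolventSymbol (C lam : ℝ) (p : Fin d → ℝ) : ℝ := lam + ∑ j ∈ {i}ᶜ, axisSymbol C lam (p j)

lemma dhat_update_zero (p : Fin d → ℝ) :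
    dhat (Function.update p i 0) = ∑ j ∈ {i}ᶜ, 4 * Real.sin (p j / 2) ^ 2 := by
  rw [dhat, Fintype.sum_eq_add_sum_compl i, Function.update_self, zero_div, Real.sin_zero,
    zero_pow two_ne_zero, mul_zero, zero_add]
  refine Finset.sum_congr rfl fun j hj => ?_
  rw [Function.update_of_ne (by simpa only [mem_compl, mem_singleton] using hj)]

lemma resolventSymbol_eq (p : Fin d → ℝ) :
    resolventSymbol i C lam p = lam + dhat (Function.update p i 0)
      + C * ∑ j ∈ {i}ᶜ, |Real.log (lam + (1 / 2) * Real.sin (p j / 2) ^ 2)|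
        * Real.sin (p j) ^ 2 := by
  simp only [resolventSymbol, axisSymbol, dhat_update_zero, sum_add_distrib, mul_sum, add_assoc]

lemma resolventSymbol_fin_three_zero_eq (p : Fin 3 → ℝ) :
    resolventSymbol 0 C lam p = lam + dhat (Function.update p 0 0)
      + C * (|Real.log (lam + (1 / 2) * Real.sin (p 1 / 2) ^ 2)| * Real.sin (p 1) ^ 2
          + |Real.log (lam + (1 / 2) * Real.sin (p 2 / 2) ^ 2)| * Real.sin (p 2) ^ 2) := by
  have hcompl : ({0}ᶜ : Finset (Fin 3)) = {1, 2} := rfl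
  rw [resolventSymbol_eq, hcompl, sum_pair (by decide)]

lemma resolventSymbol_pos (hC : 0 ≤ C) (hlam : 0 < lam) (p : Fin d → ℝ) :
    0 < resolventSymbol i C lam p :=
  add_pos_of_pos_of_nonneg hlam (sum_nonneg fun _ _ => axisSymbol_nonneg hC)

lemma continuous_inv_resolventSymbol (hC : 0 ≤ C) (hlam : 0 < lam) :
    Continuous fun p => (resolventSymbol i C lam p)⁻¹ :=
  Continuous.inv₀
    (continuous_const.add <| continuous_finsetSum _ fun j _ =>
      (continuous_axisSymbol hlam).comp (continuous_apply j))
    fun p => (resolventSymbol_pos i hC hlam p).ne'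

lemma integrableOn_inv_resolventSymbol_box (hC : 0 ≤ C) (hlam : 0 < lam) :
    IntegrableOn (fun p => (resolventSymbol i C lam p)⁻¹) (box d) := by
  refine ((continuous_inv_resolventSymbol i hC hlam).integrableOn_Icc
    (a := fun _ => 0) (b := fun _ => 2 * π)).mono_set fun p hp => ?_
  exact ⟨fun j => (hp j trivial).1, fun j => (hp j trivial).2.le⟩

end ResolventSymbol

section TransverseBox

variable {d : ℕ} (i : Fin d) {C lam r : ℝ}

/-- The product set on which all coordinates transverse to the direction `i` are comparable to the
scale `r`. -/
def transverseBox (r : ℝ) : Set (Fin d → ℝ) :=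
  Set.univ.pi fun j => if j = i then Set.Ico 0 1 else Set.Ico (r / 2) r

lemma measurableSet_transverseBox : MeasurableSet (transverseBox i r) := by
  refine MeasurableSet.univ_pi fun j => ?_
  split_ifs <;> exact measurableSet_Ico

lemma volume_transverseBox : volume (transverseBox i r) = ENNReal.ofReal (r / 2) ^ (d - 1) := by
  have hside (j : Fin d) :
      volume (if j = i then Set.Ico 0 1 else Set.Ico (r / 2) r)
        = if j = i then 1 else ENNReal.ofReal (r / 2) := by
    split_ifs <;> simp only [Real.volume_Ico, sub_zero, ENNReal.ofReal_one, sub_half]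
  rw [transverseBox, volume_pi_pi, prod_congr rfl fun j _ => hside j,
    Fintype.prod_eq_mul_prod_compl i, if_pos rfl, one_mul,
    prod_congr rfl fun j hj => if_neg (by simpa only [mem_compl, mem_singleton] using hj),
    prod_const, card_compl, card_singleton, Fintype.card_fin]

lemma transverseBox_subset_box (hr : 0 ≤ r) (hrπ : r ≤ π) : transverseBox i r ⊆ box d := by
  refine Set.pi_mono fun j _ => ?_
  split_ifs
  · exact Set.Ico_subset_Ico le_rfl (by linarith [Real.pi_gt_three])
  · exact Set.Ico_subset_Ico (by positivity) (by linarith [Real.pi_pos])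

lemma pairwise_disjoint_transverseBox_half_pow [Nontrivial (Fin d)] :
    Pairwise (Function.onFun Disjoint fun k : ℕ => transverseBox i ((1 / 2) ^ k)) := by
  intro k l hkl
  obtain ⟨j, hj⟩ := exists_ne i
  have hanti : Antitone fun k : ℕ => (1 / 2 : ℝ) ^ k :=
    pow_right_anti₀ (by norm_num) (by norm_num)
  refine Set.disjoint_univ_pi.2 ⟨j, ?_⟩
  simpa only [if_neg hj, Order.succ_eq_add_one, pow_succ, mul_one_div]
    using hanti.pairwise_disjoint_on_Ico_succ hkl

lemma resolventSymbol_le_of_mem_transverseBox (hC : 0 ≤ C) (hlam : 0 ≤ lam) (hlam' : lam ≤ 1 / 2)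
    (hr : 0 < r) (hrπ : r ≤ π) (hlr : lam ≤ r ^ 2) {p : Fin d → ℝ} (hp : p ∈ transverseBox i r) :
    resolventSymbol i C lam p ≤ d * ((1 + C * Real.log (8 * π ^ 2 / r ^ 2)) * r ^ 2) := by
  set M := (1 + C * Real.log (8 * π ^ 2 / r ^ 2)) * r ^ 2
  have hlam_le : lam ≤ M := hlr.trans <| le_mul_of_one_le_left (sq_nonneg r) <|
    le_add_of_nonneg_right (mul_nonneg hC (log_eight_pi_sq_div_sq_nonneg hr hrπ))
  have haxis (j : Fin d) (hj : j ∈ ({i} : Finset (Fin d))ᶜ) : axisSymbol C lam (p j) ≤ M := by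
    have hji : j ≠ i := by simpa only [mem_compl, mem_singleton] using hj
    have hpj : p j ∈ Set.Ico (r / 2) r := by simpa only [if_neg hji] using hp j trivial
    exact axisSymbol_le_of_mem_Ico hC hlam hlam' hr hrπ hpj
  calc resolventSymbol i C lam p
      ≤ M + ∑ _ ∈ ({i} : Finset (Fin d))ᶜ, M := add_le_add hlam_le (sum_le_sum haxis)
    _ = ∑ _ : Fin d, M := (Fintype.sum_eq_add_sum_compl i fun _ => M).symm
    _ = d * M := by rw [sum_const, card_univ, Fintype.card_fin, nsmul_eq_mul]

end TransverseBox

section DimensionThree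

variable (i : Fin 3) {C lam r : ℝ}

lemma inv_le_setIntegral_transverseBox (hC : 0 ≤ C) (hlam : 0 < lam) (hlam' : lam ≤ 1 / 2)
    (hr : 0 < r) (hrπ : r ≤ π) (hlr : lam ≤ r ^ 2) :
    (12 * (1 + C * Real.log (8 * π ^ 2 / r ^ 2)))⁻¹
      ≤ ∫ p in transverseBox i r, (resolventSymbol i C lam p)⁻¹ := by
  have hvol : volume.real (transverseBox i r) = (r / 2) ^ 2 := by
    rw [measureReal_def, volume_transverseBox, ENNReal.toReal_pow,
      ENNReal.toReal_ofReal (half_pos hr).le]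
  have hlower : ∀ p ∈ transverseBox i r,
      (3 * ((1 + C * Real.log (8 * π ^ 2 / r ^ 2)) * r ^ 2))⁻¹
        ≤ (resolventSymbol i C lam p)⁻¹ := fun p hp =>
    inv_anti₀ (resolventSymbol_pos i hC hlam p)
      (resolventSymbol_le_of_mem_transverseBox i hC hlam.le hlam' hr hrπ hlr hp)
  calc (12 * (1 + C * Real.log (8 * π ^ 2 / r ^ 2)))⁻¹
      = (3 * ((1 + C * Real.log (8 * π ^ 2 / r ^ 2)) * r ^ 2))⁻¹
          * volume.real (transverseBox i r) := by
        rw [hvol]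
        field_simp
        norm_num
    _ ≤ ∫ p in transverseBox i r, (resolventSymbol i C lam p)⁻¹ :=
        setIntegral_ge_of_const_le_real (measurableSet_transverseBox i)
          (by rw [volume_transverseBox]; exact ENNReal.pow_ne_top ENNReal.ofReal_ne_top) hlower
          ((integrableOn_inv_resolventSymbol_box i hC hlam).mono_set
            (transverseBox_subset_box i hr.le hrπ))

lemma mul_inv_le_setIntegral_transverseBox_half_pow (hC : 0 ≤ C) (hlam : 0 < lam)
    (hlam' : lam ≤ 1 / 2) {k : ℕ} (hk : 1 ≤ k) (hlk : lam ≤ ((1 / 2) ^ k) ^ 2) :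
    (12 * (1 + 9 * C))⁻¹ * (k : ℝ)⁻¹
      ≤ ∫ p in transverseBox i ((1 / 2) ^ k), (resolventSymbol i C lam p)⁻¹ := by
  have hk' : (1 : ℝ) ≤ k := by exact_mod_cast hk
  have hr : (0 : ℝ) < (1 / 2) ^ k := by positivity
  have hlog₀ := log_eight_pi_sq_div_sq_nonneg hr (half_pow_le_pi k)
  have hle : 1 + C * Real.log (8 * π ^ 2 / ((1 / 2) ^ k) ^ 2) ≤ (1 + 9 * C) * k :=
    calc 1 + C * Real.log (8 * π ^ 2 / ((1 / 2) ^ k) ^ 2)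
        ≤ k + C * (9 * k) := by gcongr; exact log_eight_pi_sq_div_half_pow_sq_le hk
      _ = (1 + 9 * C) * k := by ring
  refine le_trans ?_ (inv_le_setIntegral_transverseBox i hC hlam hlam' hr (half_pow_le_pi k) hlk)
  rw [← mul_inv, mul_assoc]
  gcongr

lemma mul_log_add_one_le_setIntegral_box (hC : 0 ≤ C) (hlam : 0 < lam) (hlam' : lam ≤ 1 / 2)
    {n : ℕ} (hn : lam ≤ ((1 / 2) ^ n) ^ 2) :
    (12 * (1 + 9 * C))⁻¹ * Real.log (n + 1)
      ≤ ∫ p in box 3, (resolventSymbol i C lam p)⁻¹ := by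
  refine mul_log_add_one_le_setIntegral (s := fun k => transverseBox i ((1 / 2) ^ k))
    (by positivity) (fun k _ => measurableSet_transverseBox i)
    ((pairwise_disjoint_transverseBox_half_pow i).set_pairwise _)
    (fun k _ => transverseBox_subset_box i (by positivity) (half_pow_le_pi k))
    (integrableOn_inv_resolventSymbol_box i hC hlam)
    (Eventually.of_forall fun p => (inv_pos.2 (resolventSymbol_pos i hC hlam p)).le)
    fun k hk => ?_
  obtain ⟨hk₁, hkn⟩ := Finset.mem_Icc.1 hk
  have hpow : (1 / 2 : ℝ) ^ n ≤ (1 / 2) ^ k :=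
    pow_le_pow_of_le_one (by norm_num) (by norm_num) hkn
  exact mul_inv_le_setIntegral_transverseBox_half_pow i hC hlam hlam' hk₁ (hn.trans (by gcongr))

lemma mul_log_log_inv_le_setIntegral_box (hC : 0 ≤ C) (hlam : 0 < lam)
    (hlam' : lam ≤ Real.exp (-4)) :
    (24 * (1 + 9 * C))⁻¹ * Real.log (Real.log lam⁻¹)
      ≤ ∫ p in box 3, (resolventSymbol i C lam p)⁻¹ := by
  have hL : 4 ≤ Real.log lam⁻¹ := by
    rw [Real.log_inv, le_neg]
    exact (Real.log_le_iff_le_exp hlam).2 hlam'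
  have hhalf : lam ≤ 1 / 2 := (hlam'.trans exp_neg_four_le_one_third).trans (by norm_num)
  set n := ⌊Real.log lam⁻¹ / 2⌋₊
  have hn : lam ≤ ((1 / 2) ^ n) ^ 2 :=
    le_half_pow_sq_of_le_half_log_inv hlam (Nat.floor_le (by linarith))
  calc (24 * (1 + 9 * C))⁻¹ * Real.log (Real.log lam⁻¹)
      = (12 * (1 + 9 * C))⁻¹ * (Real.log (Real.log lam⁻¹) / 2) := by
        rw [show 24 * (1 + 9 * C) = 2 * (12 * (1 + 9 * C)) by ring, mul_inv]
        ring
    _ ≤ (12 * (1 + 9 * C))⁻¹ * Real.log (Real.log lam⁻¹ / 2) := by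
        gcongr
        exact half_log_le_log_half hL
    _ ≤ (12 * (1 + 9 * C))⁻¹ * Real.log (n + 1) := by
        gcongr
        exact (Nat.lt_floor_add_one _).le
    _ ≤ ∫ p in box 3, (resolventSymbol i C lam p)⁻¹ :=
        mul_log_add_one_le_setIntegral_box i hC hlam hhalf hn

end DimensionThree

/-- For every `C > 0` there are `C' > 0` and `λ₀ ∈ (0,1/3]` with, for `0 < λ < λ₀`,
`(2π)^{−3} ∫_{𝕋³} (λ + d̂(p^{(1)}) + C Σ_{j=2}^3 |log(λ + (1/2)sin²(p_j/2))| sin²(p_j))^{−1} dp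
  ≥ C' log log(λ^{−1})`. -/
theorem stmt14 (C : ℝ) (hC : 0 < C) :
    ∃ C' > (0 : ℝ), ∃ lam₀ : ℝ, 0 < lam₀ ∧ lam₀ ≤ 1 / 3 ∧
      ∀ lam : ℝ, 0 < lam → lam < lam₀ →
        C' * Real.log (Real.log lam⁻¹) ≤
          ((2 * Real.pi) ^ 3)⁻¹ *
            ∫ p in box 3,
              (lam + dhat (Function.update p 0 0)
                + C * (|Real.log (lam + (1 / 2) * Real.sin (p 1 / 2) ^ 2)| * Real.sin (p 1) ^ 2
                    + |Real.log (lam + (1 / 2) * Real.sin (p 2 / 2) ^ 2)| * Real.sin (p 2) ^ 2))⁻¹ := by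
  refine ⟨((2 * π) ^ 3)⁻¹ * (24 * (1 + 9 * C))⁻¹, by positivity, Real.exp (-4), Real.exp_pos _,
    exp_neg_four_le_one_third, fun lam hlam hlt => ?_⟩
  simp only [← resolventSymbol_fin_three_zero_eq, mul_assoc]
  gcongr
  exact mul_log_log_inv_le_setIntegral_box 0 hC.le hlam hlt.le

end RWOML
end
end

section
/- There exist C' > 0 and λ₀ ∈ (0, 1/3] such that for all 0 < λ < λ₀, ∫_0^π ∫_0^π (λ + x² + y² + x² |log(λ + x²)| + y² |log(λ + y²)|)^{−1} dx dy ≥ C' log log(λ^{−1}). -/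
/-! The divergence comes from the triangle `0 ≤ y ≤ x`, `√λ ≤ x ≤ e⁻¹`. There `λ + y²` and `λ + x²`
are at most `2x²`, and `-t log t` increases on `[0, e⁻¹]`, so both logarithmic terms of the
denominator are at most `4x²|log x|`. Hence the integrand is at least `(11 x²|log x|)⁻¹`, and
integrating over `y` and then over `x` leaves
`∫ dx / (11 x|log x|) = (log |log √λ| - log |log e⁻¹|) / 11`, which is of order `log log λ⁻¹`.
-/

open MeasureTheory Real Filter Topology Finset

noncomputable section

namespace RWOML

lemma integral_mul_le_integral_integral {f : ℝ → ℝ → ℝ} {g : ℝ → ℝ} {a b R : ℝ}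
    (hf : Continuous fun p : ℝ × ℝ => f p.1 p.2) (hf₀ : ∀ x y, 0 ≤ f x y)
    (hg : IntervalIntegrable (fun x => x * g x) volume a b)
    (ha : 0 ≤ a) (hab : a ≤ b) (hbR : b ≤ R)
    (hgf : ∀ x ∈ Set.Icc a b, ∀ y ∈ Set.Icc 0 x, g x ≤ f x y) :
    ∫ x in a..b, x * g x ≤ ∫ x in 0..R, ∫ y in 0..R, f x y := by
  have hinner (x : ℝ) : Continuous (f x) := hf.comp (Continuous.prodMk_right x)
  have houter : Continuous fun x => ∫ y in 0..R, f x y :=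
    intervalIntegral.continuous_parametric_intervalIntegral_of_continuous' hf 0 R
  have hR : 0 ≤ R := ha.trans (hab.trans hbR)
  have hslice : ∀ x ∈ Set.Icc a b, x * g x ≤ ∫ y in 0..R, f x y := fun x hx => by
    have hx₀ : 0 ≤ x := ha.trans hx.1
    calc x * g x = ∫ _ in 0..x, g x := by simp
      _ ≤ ∫ y in 0..x, f x y :=
        intervalIntegral.integral_mono_on hx₀ (by simp) ((hinner x).intervalIntegrable _ _)
          (hgf x hx)
      _ ≤ ∫ y in 0..R, f x y :=
        intervalIntegral.integral_mono_interval le_rfl hx₀ (hx.2.trans hbR)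
          (.of_forall (hf₀ x)) ((hinner x).intervalIntegrable _ _)
  calc ∫ x in a..b, x * g x ≤ ∫ x in a..b, ∫ y in 0..R, f x y :=
        intervalIntegral.integral_mono_on hab hg (houter.intervalIntegrable _ _) hslice
    _ ≤ ∫ x in 0..R, ∫ y in 0..R, f x y :=
        intervalIntegral.integral_mono_interval ha hab hbR
          (.of_forall fun x => intervalIntegral.integral_nonneg hR fun y _ => hf₀ x y)
          (houter.intervalIntegrable _ _)

lemma intervalIntegrable_inv_div_log {a b : ℝ} (h : ∀ x ∈ Set.uIcc a b, log x ≠ 0) :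
    IntervalIntegrable (fun x => x⁻¹ / log x) volume a b := by
  have hx₀ : ∀ x ∈ Set.uIcc a b, x ≠ 0 := fun x hx => (log_ne_zero.1 (h x hx)).1
  exact ((continuousOn_id.inv₀ hx₀).div (continuousOn_id.log hx₀) h).intervalIntegrable

-- `Real.log` is even, so for `0 < x < 1` the primitive `log (log x)` is `log |log x|`.
lemma integral_inv_div_log {a b : ℝ} (h : ∀ x ∈ Set.uIcc a b, log x ≠ 0) :
    ∫ x in a..b, x⁻¹ / log x = log (log b) - log (log a) :=
  intervalIntegral.integral_eq_sub_of_hasDerivAt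
    (fun x hx =>
      have ⟨hx₀, hx₁, hx₂⟩ := log_ne_zero.1 (h x hx)
      hasDerivAt_log_log hx₀ hx₁ hx₂)
    (intervalIntegrable_inv_div_log h)

lemma mul_abs_log_add_le {lam s t : ℝ} (hlam : 0 ≤ lam) (hs : 0 ≤ s) (hst : lam + s ≤ t)
    (ht : t ≤ exp (-1)) : s * |log (lam + s)| ≤ -(t * log t) := by
  have hu : 0 ≤ lam + s := add_nonneg hlam hs
  have hu₁ : lam + s ≤ 1 := (hst.trans ht).trans (exp_le_one_iff.2 (by norm_num))
  calc s * |log (lam + s)| ≤ (lam + s) * |log (lam + s)| := by gcongr; linarith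
    _ = -((lam + s) * log (lam + s)) := by rw [abs_of_nonpos (log_nonpos hu hu₁), mul_neg]
    _ ≤ -(t * log t) :=
      neg_le_neg (mul_log_strictAntiOn.antitoneOn ⟨hu, hst.trans ht⟩ ⟨hu.trans hst, ht⟩ hst)

/-- The denominator `λ + x² + y² + x²|log(λ+x²)| + y²|log(λ+y²)|` of the integrand, written so that
the integrand is `(symbol lam x y)⁻¹` by definitional unfolding. -/
def symbol (lam x y : ℝ) : ℝ :=
  lam + x ^ 2 + y ^ 2 + x ^ 2 * |log (lam + x ^ 2)| + y ^ 2 * |log (lam + y ^ 2)|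

section Symbol

variable {lam : ℝ}

lemma symbol_pos (hlam : 0 < lam) (x y : ℝ) : 0 < symbol lam x y := by
  unfold symbol
  positivity

lemma continuous_symbol (hlam : 0 < lam) :
    Continuous fun p : ℝ × ℝ => symbol lam p.1 p.2 := by
  unfold symbol
  fun_prop (disch := intro; positivity)

lemma symbol_le {x y : ℝ} (hlam : 0 ≤ lam) (hx : 0 < x) (hxe : x ≤ exp (-1))
    (hlx : lam ≤ x ^ 2) (hyx : y ^ 2 ≤ x ^ 2) : symbol lam x y ≤ -(11 * x ^ 2 * log x) := by
  have hlogx : log x ≤ -1 := (log_le_iff_le_exp hx).2 hxe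
  have hxe₂ : 2 * x ^ 2 ≤ exp (-1) := by nlinarith [exp_neg_one_lt_half]
  have hlog : log (2 * x ^ 2) = log 2 + 2 * log x := by
    rw [log_mul two_ne_zero (by positivity), log_pow, Nat.cast_ofNat]
  have hterm {z : ℝ} (hz : z ^ 2 ≤ x ^ 2) :
      z ^ 2 * |log (lam + z ^ 2)| ≤ -(4 * x ^ 2 * log x) := by
    calc z ^ 2 * |log (lam + z ^ 2)| ≤ -(2 * x ^ 2 * log (2 * x ^ 2)) :=
          mul_abs_log_add_le hlam (sq_nonneg z) (by linarith) hxe₂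
      _ = -(4 * x ^ 2 * log x) - 2 * x ^ 2 * log 2 := by rw [hlog]; ring
      _ ≤ -(4 * x ^ 2 * log x) := sub_le_self _ (by positivity)
  calc symbol lam x y ≤ 3 * x ^ 2 + 2 * -(4 * x ^ 2 * log x) := by
        unfold symbol
        linarith [hterm le_rfl, hterm hyx]
    _ ≤ -(11 * x ^ 2 * log x) := by nlinarith [sq_nonneg x]

lemma log_log_sub_log_log_le_integral_inv_symbol {r R : ℝ} (hlam : 0 < lam) (hlr : √lam ≤ r)
    (hre : r ≤ exp (-1)) (hrR : r ≤ R) :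
    (log (log √lam) - log (log r)) / 11 ≤
      ∫ x in 0..R, ∫ y in 0..R, (symbol lam x y)⁻¹ := by
  have hpos : ∀ x ∈ Set.Icc √lam r, 0 < x := fun x hx => (sqrt_pos.2 hlam).trans_le hx.1
  have hlog : ∀ x ∈ Set.uIcc √lam r, log x ≠ 0 := fun x hx => by
    rw [Set.uIcc_of_le hlr] at hx
    linarith [(log_le_iff_le_exp (hpos x hx)).2 (hx.2.trans hre)]
  have hdensity : (fun x => x * (-(11 * x ^ 2 * log x))⁻¹) =
      fun x => -(1 / 11) * (x⁻¹ / log x) := by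
    ext x
    field_simp
  calc (log (log √lam) - log (log r)) / 11
      = ∫ x in √lam..r, x * (-(11 * x ^ 2 * log x))⁻¹ := by
        rw [hdensity, intervalIntegral.integral_const_mul, integral_inv_div_log hlog]
        ring
    _ ≤ ∫ x in 0..R, ∫ y in 0..R, (symbol lam x y)⁻¹ := by
        refine integral_mul_le_integral_integral
          ((continuous_symbol hlam).inv₀ fun p => (symbol_pos hlam p.1 p.2).ne')
          (fun x y => (inv_pos.2 (symbol_pos hlam x y)).le) ?_ (sqrt_nonneg lam) hlr hrR
          fun x hx y hy => ?_
        · rw [hdensity]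
          exact (intervalIntegrable_inv_div_log hlog).const_mul _
        · have hx₀ := hpos x hx
          exact inv_anti₀ (symbol_pos hlam x y) <|
            symbol_le hlam.le hx₀ (hx.2.trans hre) ((sqrt_le_left hx₀.le).1 hx.1)
              (pow_le_pow_left₀ hy.1 hy.2 2)

end Symbol

/-- There are `C' > 0` and `λ₀ ∈ (0,1/3]` such that for all `0 < λ < λ₀`,
`∫_0^π ∫_0^π (λ + x² + y² + x²|log(λ+x²)| + y²|log(λ+y²)|)^{−1} dx dy ≥ C' log log(λ^{−1})`. -/
theorem stmt15 :
    ∃ C' > (0 : ℝ), ∃ lam₀ : ℝ, 0 < lam₀ ∧ lam₀ ≤ 1 / 3 ∧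
      ∀ lam : ℝ, 0 < lam → lam < lam₀ →
        C' * Real.log (Real.log lam⁻¹) ≤
          ∫ x in (0 : ℝ)..Real.pi, ∫ y in (0 : ℝ)..Real.pi,
            (lam + x ^ 2 + y ^ 2 + x ^ 2 * |Real.log (lam + x ^ 2)|
              + y ^ 2 * |Real.log (lam + y ^ 2)|)⁻¹ := by
  refine ⟨1 / 22, by norm_num, exp (-4), exp_pos _, ?_, fun lam hlam hlt => ?_⟩
  · rw [exp_neg, one_div]
    exact inv_anti₀ (by norm_num) (by linarith [add_one_le_exp 4])
  have hL : 4 < log lam⁻¹ := by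
    rw [log_inv, lt_neg]
    exact (log_lt_iff_lt_exp hlam).2 hlt
  have hsqrt : √lam ≤ exp (-1) := by
    rw [← log_le_iff_le_exp (sqrt_pos.2 hlam), log_sqrt hlam.le]
    linarith [log_inv lam]
  have hloglog : log (log √lam) = log (log lam⁻¹) - log 2 := by
    rw [log_sqrt hlam.le, log_div (by linarith [log_inv lam]) two_ne_zero, log_inv, log_neg_eq_log]
  have hlog_four : 2 * log 2 ≤ log (log lam⁻¹) := by
    calc 2 * log 2 = log (2 ^ 2) := by simp
      _ ≤ log (log lam⁻¹) := log_le_log (by norm_num) (by linarith)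
  calc 1 / 22 * log (log lam⁻¹) ≤ (log (log √lam) - log (log (exp (-1)))) / 11 := by
        rw [hloglog, log_exp, log_neg_eq_log, log_one]
        linarith
    _ ≤ _ := log_log_sub_log_log_le_integral_inv_symbol hlam hsqrt le_rfl
        (by linarith [exp_neg_one_lt_half, pi_gt_three])

end RWOML
end
end

section
/- There exist C' > 0 and λ₀ ∈ (0, 1/3] such that for all 0 < λ < λ₀, ∫_0^π ∫_0^π (λ + x² + y² + x² |log(λ + x²)|)^{−1} dx dy ≥ C' (log(λ^{−1}))^{1/2}. -/
open MeasureTheory Real Filter Topology Finset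

noncomputable section

namespace RWOML

/-!
For `a > 0` and `√a ≤ b`, `∫_0^b dy / (a + y²) = a^{-1/2} arctan (b / √a) ≥ (π / 4) a^{-1/2}`; the
inner integral has this form with `a = λ + x² + x²|log(λ + x²)|` and `b = π`. On the strip
`λ^{1/2} ≤ x ≤ λ^{1/4}` the term `λ` is at most `x²` and the logarithm is at most `log λ⁻¹` in
absolute value, so that `a ≤ 4 x² log λ⁻¹`. The double integral is therefore at least a constant
times `(log λ⁻¹)^{-1/2} ∫ dx / x` over the strip, and there `∫ dx / x = (log λ⁻¹) / 4`.
-/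

lemma abs_log_le_log_inv {a t : ℝ} (ha : 0 < a) (hat : a ≤ t) (ht : t ≤ 1) :
    |log t| ≤ log a⁻¹ := by
  rw [abs_of_nonpos (log_nonpos (ha.le.trans hat) ht), log_inv]
  exact neg_le_neg (log_le_log ha hat)

lemma one_le_log_inv {a : ℝ} (ha : 0 < a) (h3 : a ≤ 1 / 3) : 1 ≤ log a⁻¹ := by
  rw [le_log_iff_exp_le (inv_pos.2 ha)]
  calc exp 1 ≤ 3 := exp_one_lt_three.le
    _ ≤ a⁻¹ := (le_inv_comm₀ three_pos ha).2 (by rwa [← one_div])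

lemma add_sqrt_le_one {a : ℝ} (h3 : a ≤ 1 / 3) : a + √a ≤ 1 := by
  have hsqrt : √a ≤ 3 / 5 := sqrt_le_iff.2 ⟨by norm_num, by linarith⟩
  linarith

lemma sqrt_le_sqrt_sqrt {a : ℝ} (h0 : 0 ≤ a) (h1 : a ≤ 1) : √a ≤ √√a :=
  sqrt_le_sqrt (le_sqrt_of_sq_le (pow_le_of_le_one h0 h1 two_ne_zero))

lemma integral_inv_add_sq {a : ℝ} (ha : 0 < a) (b c : ℝ) :
    ∫ y in b..c, (a + y ^ 2)⁻¹ = (√a)⁻¹ * (arctan (c / √a) - arctan (b / √a)) := by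
  simpa only [sq_sqrt ha.le] using integral_inv_sq_add_sq (a := b) (b := c) (sqrt_pos.2 ha).ne'

lemma pi_div_four_mul_inv_sqrt_le_integral_inv_add_sq {a b : ℝ} (ha : 0 < a) (hab : √a ≤ b) :
    π / 4 * (√a)⁻¹ ≤ ∫ y in (0 : ℝ)..b, (a + y ^ 2)⁻¹ := by
  have harctan : π / 4 ≤ arctan (b / √a) :=
    arctan_one.symm.trans_le (arctan_mono ((one_le_div (sqrt_pos.2 ha)).2 hab))
  rw [integral_inv_add_sq ha, zero_div, arctan_zero, sub_zero, mul_comm]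
  gcongr

lemma integral_inv_sqrt_to_sqrt_sqrt {a : ℝ} (ha : 0 < a) :
    ∫ x in √a..√√a, x⁻¹ = log a⁻¹ / 4 := by
  have hr : 0 < √a := sqrt_pos.2 ha
  have hrr : 0 < √√a := sqrt_pos.2 hr
  rw [integral_inv_of_pos hr hrr, log_div hrr.ne' hr.ne', log_sqrt hr.le, log_sqrt ha.le, log_inv]
  ring

/-- The part `λ + x² + x²|log(λ + x²)|` of the denominator that does not depend on `y`. It is the
squared mass `m²` of the inner integral, read as `∫ dy / (m² + y²)`. -/
def massSq (lam x : ℝ) : ℝ := lam + x ^ 2 + x ^ 2 * |log (lam + x ^ 2)|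

section MassSq

variable {lam x : ℝ}

lemma massSq_pos (hlam : 0 < lam) (x : ℝ) : 0 < massSq lam x := by
  unfold massSq
  positivity

lemma continuous_massSq (hlam : 0 < lam) : Continuous (massSq lam) := by
  have hlog : Continuous fun x : ℝ => log (lam + x ^ 2) :=
    Continuous.log (by fun_prop) fun x => by positivity
  unfold massSq
  fun_prop

lemma massSq_le_two (hlam : 0 < lam) (hx : lam + x ^ 2 ≤ 1) : massSq lam x ≤ 2 := by
  have hmul : x ^ 2 * |log (lam + x ^ 2)| ≤ 1 :=
    calc x ^ 2 * |log (lam + x ^ 2)| ≤ (lam + x ^ 2) * |log (lam + x ^ 2)| := by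
          gcongr
          exact le_add_of_nonneg_left hlam.le
      _ = |log (lam + x ^ 2) * (lam + x ^ 2)| := by
          rw [abs_mul, abs_of_pos (by positivity : 0 < lam + x ^ 2), mul_comm]
      _ ≤ 1 := (abs_log_mul_self_lt _ (by positivity) hx).le
  unfold massSq
  linarith

lemma massSq_le_two_add_log_mul_sq (hlam : 0 < lam) (hlx : lam ≤ x ^ 2)
    (hx : lam + x ^ 2 ≤ 1) : massSq lam x ≤ (2 + log lam⁻¹) * x ^ 2 := by
  have hlog : |log (lam + x ^ 2)| ≤ log lam⁻¹ :=
    abs_log_le_log_inv hlam (le_add_of_nonneg_right (sq_nonneg x)) hx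
  have hmul := mul_le_mul_of_nonneg_left hlog (sq_nonneg x)
  unfold massSq
  linarith

lemma sqrt_massSq_le_two_mul_sqrt_log_mul (hlam : 0 < lam) (hx0 : 0 ≤ x)
    (hlog : 1 ≤ log lam⁻¹) (hlx : lam ≤ x ^ 2) (hx : lam + x ^ 2 ≤ 1) :
    √(massSq lam x) ≤ 2 * √(log lam⁻¹) * x := by
  refine sqrt_le_iff.2 ⟨by positivity, ?_⟩
  calc massSq lam x ≤ (2 + log lam⁻¹) * x ^ 2 := massSq_le_two_add_log_mul_sq hlam hlx hx
    _ ≤ 4 * log lam⁻¹ * x ^ 2 := by gcongr; linarith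
    _ = (2 * √(log lam⁻¹) * x) ^ 2 := by
        rw [mul_pow, mul_pow, sq_sqrt (by linarith)]
        norm_num

lemma continuous_integral_inv_massSq_add_sq (hlam : 0 < lam) (b c : ℝ) :
    Continuous fun x => ∫ y in b..c, (massSq lam x + y ^ 2)⁻¹ := by
  have hsqrt : Continuous fun x => √(massSq lam x) := (continuous_massSq hlam).sqrt
  have hne (x : ℝ) : √(massSq lam x) ≠ 0 := (sqrt_pos.2 (massSq_pos hlam x)).ne'
  simp only [integral_inv_add_sq (massSq_pos hlam _)]
  fun_prop (disch := assumption)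

lemma le_integral_inv_massSq_add_sq (hlam : 0 < lam) (hx0 : 0 < x) (hlog : 1 ≤ log lam⁻¹)
    (hlx : lam ≤ x ^ 2) (hx : lam + x ^ 2 ≤ 1) :
    π / 8 * (√(log lam⁻¹))⁻¹ * x⁻¹ ≤ ∫ y in (0 : ℝ)..π, (massSq lam x + y ^ 2)⁻¹ := by
  have hm : 0 < massSq lam x := massSq_pos hlam x
  have hpi : √(massSq lam x) ≤ π :=
    sqrt_le_iff.2 ⟨pi_pos.le, by nlinarith [massSq_le_two hlam hx, pi_gt_three]⟩
  calc π / 8 * (√(log lam⁻¹))⁻¹ * x⁻¹ = π / 4 * (2 * √(log lam⁻¹) * x)⁻¹ := by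
        rw [mul_inv, mul_inv]
        ring
    _ ≤ π / 4 * (√(massSq lam x))⁻¹ := by
        gcongr
        exact sqrt_massSq_le_two_mul_sqrt_log_mul hlam hx0.le hlog hlx hx
    _ ≤ ∫ y in (0 : ℝ)..π, (massSq lam x + y ^ 2)⁻¹ :=
        pi_div_four_mul_inv_sqrt_le_integral_inv_add_sq hm hpi

lemma le_integral_inv_massSq_add_sq_of_mem_Icc (hlam : 0 < lam) (h3 : lam ≤ 1 / 3)
    (hx : x ∈ Set.Icc (√lam) (√√lam)) :
    π / 8 * (√(log lam⁻¹))⁻¹ * x⁻¹ ≤ ∫ y in (0 : ℝ)..π, (massSq lam x + y ^ 2)⁻¹ := by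
  have hx0 : 0 < x := (sqrt_pos.2 hlam).trans_le hx.1
  have hlx : lam ≤ x ^ 2 := (sqrt_le_left hx0.le).1 hx.1
  have hxr : x ^ 2 ≤ √lam := (le_sqrt' hx0).1 hx.2
  exact le_integral_inv_massSq_add_sq hlam hx0 (one_le_log_inv hlam h3) hlx
    (by linarith [add_sqrt_le_one h3])

lemma mul_sqrt_log_inv_le_integral_strip (hlam : 0 < lam) (h3 : lam ≤ 1 / 3) :
    π / 32 * √(log lam⁻¹) ≤
      ∫ x in √lam..√√lam, ∫ y in (0 : ℝ)..π, (massSq lam x + y ^ 2)⁻¹ := by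
  have hr : 0 < √lam := sqrt_pos.2 hlam
  have hle : √lam ≤ √√lam := sqrt_le_sqrt_sqrt hlam.le (by linarith)
  have hint : IntervalIntegrable (fun x => π / 8 * (√(log lam⁻¹))⁻¹ * x⁻¹) volume √lam √√lam :=
    (intervalIntegral.intervalIntegrable_inv
      (fun x hx => (hr.trans_le (Set.uIcc_of_le hle ▸ hx).1).ne') continuousOn_id).const_mul _
  calc π / 32 * √(log lam⁻¹) = π / 8 * (√(log lam⁻¹))⁻¹ * (log lam⁻¹ / 4) := by
        linear_combination -(π / 32) * div_sqrt (x := log lam⁻¹)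
    _ = ∫ x in √lam..√√lam, π / 8 * (√(log lam⁻¹))⁻¹ * x⁻¹ := by
        rw [intervalIntegral.integral_const_mul, integral_inv_sqrt_to_sqrt_sqrt hlam]
    _ ≤ ∫ x in √lam..√√lam, ∫ y in (0 : ℝ)..π, (massSq lam x + y ^ 2)⁻¹ :=
        intervalIntegral.integral_mono_on hle hint
          ((continuous_integral_inv_massSq_add_sq hlam 0 π).intervalIntegrable _ _)
          fun x hx => le_integral_inv_massSq_add_sq_of_mem_Icc hlam h3 hx

end MassSq

/-- There are `C' > 0` and `λ₀ ∈ (0,1/3]` such that for all `0 < λ < λ₀`,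
`∫_0^π ∫_0^π (λ + x² + y² + x²|log(λ+x²)|)^{−1} dx dy ≥ C' (log(λ^{−1}))^{1/2}`. -/
theorem stmt19 :
    ∃ C' > (0 : ℝ), ∃ lam₀ : ℝ, 0 < lam₀ ∧ lam₀ ≤ 1 / 3 ∧
      ∀ lam : ℝ, 0 < lam → lam < lam₀ →
        C' * Real.sqrt (Real.log lam⁻¹) ≤
          ∫ x in (0 : ℝ)..Real.pi, ∫ y in (0 : ℝ)..Real.pi,
            (lam + x ^ 2 + y ^ 2 + x ^ 2 * |Real.log (lam + x ^ 2)|)⁻¹ := by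
  refine ⟨π / 32, by positivity, 1 / 3, by norm_num, le_rfl, fun lam hlam hlt => ?_⟩
  have hlower : 0 ≤ √lam := sqrt_nonneg lam
  have hlen : √lam ≤ √√lam := sqrt_le_sqrt_sqrt hlam.le (by linarith)
  have hupper : √√lam ≤ π := sqrt_le_iff.2 ⟨pi_pos.le, by
    nlinarith [add_sqrt_le_one hlt.le, pi_gt_three]⟩
  have hnonneg (x : ℝ) : 0 ≤ ∫ y in (0 : ℝ)..π, (massSq lam x + y ^ 2)⁻¹ :=
    intervalIntegral.integral_nonneg pi_pos.le fun y _ =>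
      inv_nonneg.2 (add_nonneg (massSq_pos hlam x).le (sq_nonneg y))
  calc π / 32 * √(log lam⁻¹)
      ≤ ∫ x in √lam..√√lam, ∫ y in (0 : ℝ)..π, (massSq lam x + y ^ 2)⁻¹ :=
        mul_sqrt_log_inv_le_integral_strip hlam hlt.le
    _ ≤ ∫ x in (0 : ℝ)..π, ∫ y in (0 : ℝ)..π, (massSq lam x + y ^ 2)⁻¹ :=
        intervalIntegral.integral_mono_interval hlower hlen hupper (Eventually.of_forall hnonneg)
          ((continuous_integral_inv_massSq_add_sq hlam 0 π).intervalIntegrable _ _)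
    _ = ∫ x in (0 : ℝ)..π, ∫ y in (0 : ℝ)..π,
          (lam + x ^ 2 + y ^ 2 + x ^ 2 * |log (lam + x ^ 2)|)⁻¹ := by
        simp only [massSq, add_right_comm]

end RWOML
end
end
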